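/- arXiv:1811.08477 — 5 statements merged into one kernel-verified Lean document; each statement's English description precedes it below -/
import Mathlib

section
/- Let d ≥ 1, let ν be a Lévy measure on ℝ^d and b : ℝ^d → ℝ^d a function. For f ∈ C_b²(ℝ^d) define Lf(x) = ⟨∇f(x), b(x)⟩ + ∫ [f(x+u) − f(x) − ⟨∇f(x), u⟩·1_{(0,1)}(|u|)] ν(du). Let ν̃ be a family of Borel measures ν̃(x,y,·) on ℝ^d × ℝ^d, indexed by (x,y) ∈ ℝ^d × ℝ^d, such that ν̃(x,y,{(0,0)}) = 0 and ∫ min(1, |u|² + |v|²) ν̃(x,y,du,dv) < ∞ for all x,y, and define for F ∈ C_b²(ℝ^d × ℝ^d): L̃F(x,y) = ⟨∇_x F(x,y), b(x)⟩ + ⟨∇_y F(x,y), b(y)⟩ + ∫ [F(x+u, y+v) − F(x,y) − ⟨∇_x F(x,y), u⟩·1_{(0,1)}(|u|) − ⟨∇_y F(x,y), v⟩·1_{(0,1)}(|v|)] ν̃(x,y,du,dv). Then the following are equivalent: (i) for all x, y ∈ ℝ^d, all f, g ∈ C_b²(ℝ^d), L̃(f⊗1)(x,y) = Lf(x) and L̃(1⊗g)(x,y)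 = Lg(y) (where (f⊗g)(x,y) := f(x)g(y)); (ii) for all x, y ∈ ℝ^d and all Borel sets A, B ⊆ ℝ^d \ {0}: ν̃(x,y, A × ℝ^d) = ν(A) and ν̃(x,y, ℝ^d × B) = ν(B). (All integrands appearing above are automatically ν- resp. ν̃-integrable.) -/
open MeasureTheory
open scoped RealInnerProductSpace ENNReal

/-- `f ∈ C_b²`: bounded, twice continuously differentiable with bounded first and
second derivatives. -/
def IsCb2 {F : Type*} [NormedAddCommGroup F] [NormedSpace ℝ F] (f : F → ℝ) : Prop :=
  ContDiff ℝ 2 f ∧ (∃ C, ∀ x, |f x| ≤ C) ∧ (∃ C, ∀ x, ‖fderiv ℝ f x‖ ≤ C) ∧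
    (∃ C, ∀ x, ‖fderiv ℝ (fderiv ℝ f) x‖ ≤ C)

/-- The indicator function `1_{(0,1)}`. -/
noncomputable def ind01 (t : ℝ) : ℝ := Set.indicator (Set.Ioo (0 : ℝ) 1) (fun _ => (1 : ℝ)) t

/-- The Lévy-type generator
`Lf(x) = ⟨∇f(x), b(x)⟩ + ∫ [f(x+u) - f(x) - ⟨∇f(x), u⟩·1_{(0,1)}(|u|)] ν(du)`. -/
noncomputable def Lop {d : ℕ} (ν : Measure (EuclideanSpace ℝ (Fin d)))
    (b : EuclideanSpace ℝ (Fin d) → EuclideanSpace ℝ (Fin d))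
    (f : EuclideanSpace ℝ (Fin d) → ℝ) (x : EuclideanSpace ℝ (Fin d)) : ℝ :=
  ⟪gradient f x, b x⟫ + ∫ u, (f (x + u) - f x - ⟪gradient f x, u⟫ * ind01 ‖u‖) ∂ν

/-- The candidate coupling operator
`L̃F(x,y) = ⟨∇ₓF(x,y), b(x)⟩ + ⟨∇_yF(x,y), b(y)⟩ + ∫ [F(x+u,y+v) - F(x,y)
  - ⟨∇ₓF(x,y), u⟩·1_{(0,1)}(|u|) - ⟨∇_yF(x,y), v⟩·1_{(0,1)}(|v|)] ν̃(x,y,du,dv)`. -/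
noncomputable def Lcouple {d : ℕ}
    (b : EuclideanSpace ℝ (Fin d) → EuclideanSpace ℝ (Fin d))
    (ν' : EuclideanSpace ℝ (Fin d) → EuclideanSpace ℝ (Fin d) →
      Measure (EuclideanSpace ℝ (Fin d) × EuclideanSpace ℝ (Fin d)))
    (F : EuclideanSpace ℝ (Fin d) × EuclideanSpace ℝ (Fin d) → ℝ)
    (x y : EuclideanSpace ℝ (Fin d)) : ℝ :=
  ⟪gradient (fun x' => F (x', y)) x, b x⟫ + ⟪gradient (fun y' => F (x, y')) y, b y⟫ +
    ∫ p, (F (x + p.1, y + p.2) - F (x, y)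
      - ⟪gradient (fun x' => F (x', y)) x, p.1⟫ * ind01 ‖p.1‖
      - ⟪gradient (fun y' => F (x, y')) y, p.2⟫ * ind01 ‖p.2‖) ∂(ν' x y)

/-!
On functions of one variable the coupling operator only sees a marginal of `ν̃(x, y, ·)`: it has the
form of `L` with `ν` replaced by that marginal, and the drift terms agree. The integrand of `L`
vanishes at `u = 0`, so marginals that agree with `ν` away from the origin give the same operator.
Conversely, if `φ` is smooth with compact support away from the origin, then for the test function
`f = φ(· - x)` the compensated increment at `x` is `φ` itself. Hence equality of the operators at
the single point `x` forces equality of the integrals of all such `φ`, and these determine a measure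
on the complement of the origin that is locally finite there.
-/

open Filter Set
open scoped Topology

lemma exists_bound_fderiv_of_hasCompactSupport {F G : Type*} [NormedAddCommGroup F]
    [NormedSpace ℝ F] [NormedAddCommGroup G] [NormedSpace ℝ G] {g : F → G}
    (hg : ContDiff ℝ 1 g) (hc : HasCompactSupport g) : ∃ C, ∀ x, ‖fderiv ℝ g x‖ ≤ C :=
  (hc.fderiv ℝ).exists_bound_of_continuous (hg.continuous_fderiv one_ne_zero)

lemma IsCb2.of_hasCompactSupport {F : Type*} [NormedAddCommGroup F] [NormedSpace ℝ F] {f : F → ℝ}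
    (hf : ContDiff ℝ 2 f) (hc : HasCompactSupport f) : IsCb2 f :=
  ⟨hf, hc.exists_bound_of_continuous hf.continuous,
    exists_bound_fderiv_of_hasCompactSupport (hf.of_le one_le_two) hc,
    exists_bound_fderiv_of_hasCompactSupport (hf.fderiv_right (by norm_num)) (hc.fderiv ℝ)⟩

section MeasuresFromTestFunctions

lemma finiteAtFilter_nhds_of_lintegral_ne_top {X : Type*} [TopologicalSpace X] [MeasurableSpace X]
    {μ : Measure X} {g : X → ℝ≥0∞} (hg : AEMeasurable g μ) (hint : ∫⁻ z, g z ∂μ ≠ ∞) {x : X}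
    (hgx : ContinuousAt g x) (hx : g x ≠ 0) : μ.FiniteAtFilter (𝓝 x) := by
  obtain ⟨c, hc0, hcx⟩ := exists_between (pos_iff_ne_zero.2 hx)
  refine ⟨{z | c ≤ g z}, (hgx.eventually_const_lt hcx).mono fun _ ↦ le_of_lt, ?_⟩
  exact (meas_ge_le_lintegral_div hg hc0.ne' hcx.ne_top).trans_lt (ENNReal.div_lt_top hint hc0.ne')

lemma tendsto_integral_one_sub_one_sub_pow {X : Type*} [MeasurableSpace X] {μ : Measure X}
    {f : X → ℝ} (hf : Measurable f) (h01 : range f ⊆ Icc 0 1) (hμ : μ (Function.support f) ≠ ∞) :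
    Tendsto (fun k : ℕ ↦ ∫ z, (1 - (1 - f z) ^ k) ∂μ) atTop (𝓝 (μ.real (Function.support f))) := by
  have hfz (z : X) : f z ∈ Icc 0 1 := h01 (mem_range_self z)
  have hms : MeasurableSet (Function.support f) := measurableSet_support hf
  have hbound (k : ℕ) (z : X) :
      ‖1 - (1 - f z) ^ k‖ ≤ (Function.support f).indicator (1 : X → ℝ) z := by
    by_cases hz : z ∈ Function.support f
    · have hnonneg : 0 ≤ (1 - f z) ^ k := pow_nonneg (by linarith [(hfz z).2]) k
      have hle : (1 - f z) ^ k ≤ 1 :=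
        pow_le_one₀ (by linarith [(hfz z).2]) (by linarith [(hfz z).1])
      rw [indicator_of_mem hz, Pi.one_apply, Real.norm_eq_abs, abs_le]
      constructor <;> linarith
    · simp [Function.notMem_support.1 hz]
  have hlim (z : X) : Tendsto (fun k : ℕ ↦ 1 - (1 - f z) ^ k) atTop
      (𝓝 ((Function.support f).indicator (1 : X → ℝ) z)) := by
    by_cases hz : z ∈ Function.support f
    · have hpos : 0 < f z := (hfz z).1.lt_of_ne' hz
      have hpow : Tendsto (fun k : ℕ ↦ (1 - f z) ^ k) atTop (𝓝 0) :=
        tendsto_pow_atTop_nhds_zero_of_lt_one (by linarith [(hfz z).2]) (by linarith)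
      simpa [indicator_of_mem hz] using hpow.const_sub 1
    · simp [Function.notMem_support.1 hz]
  rw [← integral_indicator_one hms]
  exact tendsto_integral_of_dominated_convergence _ (fun k ↦ by fun_prop)
    ((integrable_indicator_iff hms).2 (integrableOn_const hμ))
    (fun k ↦ .of_forall (hbound k)) (.of_forall hlim)

variable {E : Type*} [NormedAddCommGroup E] [NormedSpace ℝ E] [FiniteDimensional ℝ E]
  [MeasurableSpace E] [BorelSpace E] {μ ν : Measure E}

lemma measure_eq_of_forall_integral_contDiff_eq {K V : Set E} (hK : IsCompact K) (hV : IsOpen V)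
    (hVK : V ⊆ K) (hμ : μ V ≠ ∞) (hν : ν V ≠ ∞) {n : ℕ∞}
    (h : ∀ φ : E → ℝ, ContDiff ℝ n φ → tsupport φ ⊆ K → ∫ z, φ z ∂μ = ∫ z, φ z ∂ν) :
    μ V = ν V := by
  -- As `0 ≤ f ≤ 1`, the smooth functions `1 - (1 - f) ^ k` increase to the indicator of `support f`.
  obtain ⟨f, rfl, hfd, h01⟩ := hV.exists_contDiff_support_eq (n := n)
  have hsupp (k : ℕ) : tsupport (fun z ↦ 1 - (1 - f z) ^ k) ⊆ K := by
    refine closure_minimal (fun z hz ↦ hVK fun hfz ↦ hz ?_) hK.isClosed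
    simp [hfz]
  have hint (k : ℕ) : ∫ z, (1 - (1 - f z) ^ k) ∂μ = ∫ z, (1 - (1 - f z) ^ k) ∂ν :=
    h _ (contDiff_const.sub ((contDiff_const.sub hfd).pow k)) (hsupp k)
  have hfm : Measurable f := hfd.continuous.measurable
  have hlim := tendsto_integral_one_sub_one_sub_pow hfm h01 hμ
  simp only [hint] at hlim
  exact (measureReal_eq_measureReal_iff hμ hν).1 <|
    tendsto_nhds_unique hlim (tendsto_integral_one_sub_one_sub_pow hfm h01 hν)

lemma restrict_interior_eq_of_forall_integral_contDiff_eq {K : Set E} (hK : IsCompact K)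
    (hμ : μ K ≠ ∞) (hν : ν K ≠ ∞) {n : ℕ∞}
    (h : ∀ φ : E → ℝ, ContDiff ℝ n φ → tsupport φ ⊆ K → ∫ z, φ z ∂μ = ∫ z, φ z ∂ν) :
    μ.restrict (interior K) = ν.restrict (interior K) := by
  have hopen (V : Set E) (hV : IsOpen V) (hVK : V ⊆ interior K) : μ V = ν V :=
    have hVK' : V ⊆ K := hVK.trans interior_subset
    measure_eq_of_forall_integral_contDiff_eq hK hV hVK' (measure_ne_top_of_subset hVK' hμ)
      (measure_ne_top_of_subset hVK' hν) h
  have : IsFiniteMeasure (μ.restrict (interior K)) :=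
    isFiniteMeasure_restrict.2 (measure_ne_top_of_subset interior_subset hμ)
  refine ext_of_generate_finite {V | IsOpen V} BorelSpace.measurable_eq isPiSystem_isOpen
    (fun V (hV : IsOpen V) ↦ ?_) ?_
  · simp only [Measure.restrict_apply hV.measurableSet]
    exact hopen _ (hV.inter isOpen_interior) inter_subset_right
  · simpa using hopen _ isOpen_interior subset_rfl

theorem restrict_eq_of_forall_integral_contDiff_eq {U : Set E} (hU : IsOpen U)
    (hμ : ∀ x ∈ U, μ.FiniteAtFilter (𝓝 x)) (hν : ∀ x ∈ U, ν.FiniteAtFilter (𝓝 x))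
    {n : ℕ∞}
    (h : ∀ φ : E → ℝ, ContDiff ℝ n φ → HasCompactSupport φ → tsupport φ ⊆ U →
      ∫ z, φ z ∂μ = ∫ z, φ z ∂ν) :
    μ.restrict U = ν.restrict U := by
  have hloc : ∀ x ∈ U, ∃ V ∈ 𝓝 x, μ.restrict V = ν.restrict V := by
    intro x hx
    obtain ⟨S, hS, hμS⟩ := hμ x hx
    obtain ⟨T, hT, hνT⟩ := hν x hx
    obtain ⟨K, hKx, hKsub, hK⟩ :=
      local_compact_nhds (inter_mem (hU.mem_nhds hx) (inter_mem hS hT))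
    obtain ⟨hKU, hKS, hKT⟩ : K ⊆ U ∧ K ⊆ S ∧ K ⊆ T := by simpa only [subset_inter_iff] using hKsub
    refine ⟨interior K, interior_mem_nhds.2 hKx,
      restrict_interior_eq_of_forall_integral_contDiff_eq (n := n) hK
        (measure_ne_top_of_subset hKS hμS.ne) (measure_ne_top_of_subset hKT hνT.ne) ?_⟩
    exact fun φ hφ hφK ↦ h φ hφ (hK.of_isClosed_subset (isClosed_tsupport φ) hφK) (hφK.trans hKU)
  choose! V hVx hV using hloc
  obtain ⟨t, htU, htc, hcover⟩ :=
    TopologicalSpace.countable_cover_nhdsWithin fun x hx ↦ mem_nhdsWithin_of_mem_nhds (hVx x hx)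
  exact Measure.restrict_congr_mono hcover <|
    (Measure.restrict_biUnion_congr htc).2 fun x hx ↦ hV x (htU hx)

end MeasuresFromTestFunctions

lemma finiteAtFilter_nhds_of_lintegral_min_one_norm_sq_lt_top {E : Type*} [NormedAddCommGroup E]
    [MeasurableSpace E] [OpensMeasurableSpace E] {μ : Measure E}
    (hμ : ∫⁻ z, ENNReal.ofReal (min 1 (‖z‖ ^ 2)) ∂μ < ∞) {x : E} (hx : x ≠ 0) :
    μ.FiniteAtFilter (𝓝 x) := by
  have hcont : Continuous fun z : E ↦ ENNReal.ofReal (min 1 (‖z‖ ^ 2)) :=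
    ENNReal.continuous_ofReal.comp (by fun_prop)
  exact finiteAtFilter_nhds_of_lintegral_ne_top hcont.aemeasurable hμ.ne hcont.continuousAt
    (by simpa using hx)

lemma restrict_compl_singleton_eq_iff {X : Type*} [MeasurableSpace X] [MeasurableSingletonClass X]
    {μ ν : Measure X} {x : X} :
    μ.restrict {x}ᶜ = ν.restrict {x}ᶜ ↔ ∀ A, MeasurableSet A → x ∉ A → μ A = ν A := by
  simp only [Measure.restrict_congr_meas (measurableSet_singleton x).compl,
    subset_compl_singleton_iff]
  exact forall_congr' fun A ↦ forall_comm

section LevyIntegrand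

variable {E : Type*} [NormedAddCommGroup E] [InnerProductSpace ℝ E]

/-- The compensated increment `f(x+u) - f(x) - ⟨∇f(x), u⟩·1_{(0,1)}(|u|)` of `f` at `x`, which `Lop`
integrates against the Lévy measure. -/
noncomputable def levyIntegrand [CompleteSpace E] (f : E → ℝ) (x u : E) : ℝ :=
  f (x + u) - f x - ⟪gradient f x, u⟫ * ind01 ‖u‖

lemma levyIntegrand_zero_right [CompleteSpace E] (f : E → ℝ) (x : E) :
    levyIntegrand f x 0 = 0 := by
  simp [levyIntegrand]

lemma levyIntegrand_comp_sub_right_of_notMem_tsupport [CompleteSpace E] {φ : E → ℝ}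
    (hφ : (0 : E) ∉ tsupport φ) (x : E) : levyIntegrand (fun z ↦ φ (z - x)) x = φ := by
  have hgrad : gradient (fun z ↦ φ (z - x)) x = 0 := by
    simp [gradient, fderiv_comp_sub, (notMem_tsupport_iff_eventuallyEq.1 hφ).fderiv_eq]
  funext u
  simp [levyIntegrand, hgrad, image_eq_zero_of_notMem_tsupport hφ]

lemma setIntegral_compl_zero_levyIntegrand [CompleteSpace E] [MeasurableSpace E] (f : E → ℝ) (x : E)
    (μ : Measure E) :
    ∫ u in {0}ᶜ, levyIntegrand f x u ∂μ = ∫ u, levyIntegrand f x u ∂μ := by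
  refine setIntegral_eq_integral_of_forall_compl_eq_zero fun u hu ↦ ?_
  obtain rfl : u = 0 := not_not.1 hu
  exact levyIntegrand_zero_right f x

variable [MeasurableSpace E] [BorelSpace E]

lemma measurable_levyIntegrand [CompleteSpace E] {f : E → ℝ} (hf : Measurable f) (x : E) :
    Measurable (levyIntegrand f x) := by
  have hind : Measurable ind01 := measurable_const.indicator measurableSet_Ioo
  have hinner : Measurable fun u : E ↦ ⟪gradient f x, u⟫ :=
    (innerSL ℝ (gradient f x)).continuous.measurable
  unfold levyIntegrand
  fun_prop

theorem forall_integral_levyIntegrand_eq_iff [FiniteDimensional ℝ E] {μ ν : Measure E}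
    (hμ : ∫⁻ z, ENNReal.ofReal (min 1 (‖z‖ ^ 2)) ∂μ < ∞)
    (hν : ∫⁻ z, ENNReal.ofReal (min 1 (‖z‖ ^ 2)) ∂ν < ∞) (x : E) :
    (∀ f, IsCb2 f → ∫ u, levyIntegrand f x u ∂μ = ∫ u, levyIntegrand f x u ∂ν) ↔
      μ.restrict {0}ᶜ = ν.restrict {0}ᶜ := by
  refine ⟨fun h ↦ ?_, fun h f _ ↦ ?_⟩
  · refine restrict_eq_of_forall_integral_contDiff_eq (n := 2) isOpen_compl_singleton
      (fun _ ↦ finiteAtFilter_nhds_of_lintegral_min_one_norm_sq_lt_top hμ)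
      (fun _ ↦ finiteAtFilter_nhds_of_lintegral_min_one_norm_sq_lt_top hν)
      fun φ hφ hφc hφ0 ↦ ?_
    have hCb2 : IsCb2 fun z ↦ φ (z - x) := .of_hasCompactSupport
      (hφ.comp (contDiff_id.sub contDiff_const))
      (hφc.comp_homeomorph (Homeomorph.subRight x))
    simpa only [levyIntegrand_comp_sub_right_of_notMem_tsupport
      (subset_compl_singleton_iff.1 hφ0)] using h _ hCb2
  · rw [← setIntegral_compl_zero_levyIntegrand f x μ, h, setIntegral_compl_zero_levyIntegrand]

end LevyIntegrand

section Marginals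

lemma lintegral_fst_min_one_norm_sq_lt_top {E F : Type*} [NormedAddCommGroup E]
    [NormedAddCommGroup F] [MeasurableSpace E] [OpensMeasurableSpace E] [MeasurableSpace F]
    {ρ : Measure (E × F)}
    (hρ : ∫⁻ p, ENNReal.ofReal (min 1 (‖p.1‖ ^ 2 + ‖p.2‖ ^ 2)) ∂ρ < ∞) :
    ∫⁻ z, ENNReal.ofReal (min 1 (‖z‖ ^ 2)) ∂ρ.fst < ∞ := by
  rw [Measure.fst, lintegral_map (by fun_prop) measurable_fst]
  refine (lintegral_mono fun p ↦ ?_).trans_lt hρ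
  gcongr
  exact le_add_of_nonneg_right (sq_nonneg _)

lemma lintegral_snd_min_one_norm_sq_lt_top {E F : Type*} [NormedAddCommGroup E]
    [NormedAddCommGroup F] [MeasurableSpace E] [MeasurableSpace F] [OpensMeasurableSpace F]
    {ρ : Measure (E × F)}
    (hρ : ∫⁻ p, ENNReal.ofReal (min 1 (‖p.1‖ ^ 2 + ‖p.2‖ ^ 2)) ∂ρ < ∞) :
    ∫⁻ z, ENNReal.ofReal (min 1 (‖z‖ ^ 2)) ∂ρ.snd < ∞ := by
  rw [Measure.snd, lintegral_map (by fun_prop) measurable_snd]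
  refine (lintegral_mono fun p ↦ ?_).trans_lt hρ
  gcongr
  exact le_add_of_nonneg_left (sq_nonneg _)

variable {d : ℕ} {ν : Measure (EuclideanSpace ℝ (Fin d))}
  {b : EuclideanSpace ℝ (Fin d) → EuclideanSpace ℝ (Fin d)}
  {ν' : EuclideanSpace ℝ (Fin d) → EuclideanSpace ℝ (Fin d) →
    Measure (EuclideanSpace ℝ (Fin d) × EuclideanSpace ℝ (Fin d))}
  {x y : EuclideanSpace ℝ (Fin d)}

lemma Lcouple_comp_fst {f : EuclideanSpace ℝ (Fin d) → ℝ} (hf : Measurable f) :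
    Lcouple b ν' (fun p ↦ f p.1) x y = Lop (ν' x y).fst b f x := by
  change _ = ⟪gradient f x, b x⟫ + ∫ u, levyIntegrand f x u ∂(ν' x y).fst
  rw [Measure.fst, integral_map measurable_fst.aemeasurable
    (measurable_levyIntegrand hf x).aestronglyMeasurable]
  simp [Lcouple, levyIntegrand, gradient_fun_const]

lemma Lcouple_comp_snd {g : EuclideanSpace ℝ (Fin d) → ℝ} (hg : Measurable g) :
    Lcouple b ν' (fun p ↦ g p.2) x y = Lop (ν' x y).snd b g y := by
  change _ = ⟪gradient g y, b y⟫ + ∫ u, levyIntegrand g y u ∂(ν' x y).snd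
  rw [Measure.snd, integral_map measurable_snd.aemeasurable
    (measurable_levyIntegrand hg y).aestronglyMeasurable]
  simp [Lcouple, levyIntegrand, gradient_fun_const]

theorem forall_Lop_eq_iff {μ : Measure (EuclideanSpace ℝ (Fin d))}
    (hμ : ∫⁻ z, ENNReal.ofReal (min 1 (‖z‖ ^ 2)) ∂μ < ∞)
    (hν : ∫⁻ z, ENNReal.ofReal (min 1 (‖z‖ ^ 2)) ∂ν < ∞) :
    (∀ f, IsCb2 f → Lop μ b f x = Lop ν b f x) ↔
      ∀ A, MeasurableSet A → (0 : EuclideanSpace ℝ (Fin d)) ∉ A → μ A = ν A := by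
  rw [← restrict_compl_singleton_eq_iff, ← forall_integral_levyIntegrand_eq_iff hμ hν x]
  exact forall₂_congr fun f _ ↦ add_right_inj _

theorem forall_Lcouple_comp_fst_eq_Lop_iff
    (hν : ∫⁻ z, ENNReal.ofReal (min 1 (‖z‖ ^ 2)) ∂ν < ∞)
    (hν' : ∫⁻ p, ENNReal.ofReal (min 1 (‖p.1‖ ^ 2 + ‖p.2‖ ^ 2)) ∂(ν' x y) < ∞) :
    (∀ f, IsCb2 f → Lcouple b ν' (fun p ↦ f p.1) x y = Lop ν b f x) ↔
      ∀ A, MeasurableSet A → 0 ∉ A → ν' x y (A ×ˢ univ) = ν A := by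
  calc (∀ f, IsCb2 f → Lcouple b ν' (fun p ↦ f p.1) x y = Lop ν b f x)
    _ ↔ ∀ f, IsCb2 f → Lop (ν' x y).fst b f x = Lop ν b f x :=
      forall₂_congr fun f hf ↦ by rw [Lcouple_comp_fst hf.1.continuous.measurable]
    _ ↔ ∀ A, MeasurableSet A → 0 ∉ A → (ν' x y).fst A = ν A :=
      forall_Lop_eq_iff (lintegral_fst_min_one_norm_sq_lt_top hν') hν
    _ ↔ _ := forall₂_congr fun A hA ↦ by rw [Measure.fst_apply hA, prod_univ]

theorem forall_Lcouple_comp_snd_eq_Lop_iff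
    (hν : ∫⁻ z, ENNReal.ofReal (min 1 (‖z‖ ^ 2)) ∂ν < ∞)
    (hν' : ∫⁻ p, ENNReal.ofReal (min 1 (‖p.1‖ ^ 2 + ‖p.2‖ ^ 2)) ∂(ν' x y) < ∞) :
    (∀ g, IsCb2 g → Lcouple b ν' (fun p ↦ g p.2) x y = Lop ν b g y) ↔
      ∀ B, MeasurableSet B → 0 ∉ B → ν' x y (univ ×ˢ B) = ν B := by
  calc (∀ g, IsCb2 g → Lcouple b ν' (fun p ↦ g p.2) x y = Lop ν b g y)
    _ ↔ ∀ g, IsCb2 g → Lop (ν' x y).snd b g y = Lop ν b g y :=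
      forall₂_congr fun g hg ↦ by rw [Lcouple_comp_snd hg.1.continuous.measurable]
    _ ↔ ∀ B, MeasurableSet B → 0 ∉ B → (ν' x y).snd B = ν B :=
      forall_Lop_eq_iff (lintegral_snd_min_one_norm_sq_lt_top hν') hν
    _ ↔ _ := forall₂_congr fun B hB ↦ by rw [Measure.snd_apply hB, univ_prod]

end Marginals

/-- `L̃` is a coupling operator with marginal `L` (i.e. `L̃(f⊗1)(x,y) = Lf(x)` and
`L̃(1⊗g)(x,y) = Lg(y)` for all `f, g ∈ C_b²`) if and only if the kernel `ν̃(x,y,·)`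
has both marginals equal to `ν` on Borel sets avoiding the origin. -/
theorem stmt_0 (d : ℕ) (hd : 1 ≤ d) (ν : Measure (EuclideanSpace ℝ (Fin d)))
    [SigmaFinite ν] (hν0 : ν {0} = 0)
    (hν2 : ∫⁻ z, ENNReal.ofReal (min 1 (‖z‖ ^ 2)) ∂ν < ∞)
    (b : EuclideanSpace ℝ (Fin d) → EuclideanSpace ℝ (Fin d))
    (ν' : EuclideanSpace ℝ (Fin d) → EuclideanSpace ℝ (Fin d) →
      Measure (EuclideanSpace ℝ (Fin d) × EuclideanSpace ℝ (Fin d)))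
    (hν'0 : ∀ x y, ν' x y {((0 : EuclideanSpace ℝ (Fin d)), (0 : EuclideanSpace ℝ (Fin d)))} = 0)
    (hν'2 : ∀ x y, ∫⁻ p, ENNReal.ofReal (min 1 (‖p.1‖ ^ 2 + ‖p.2‖ ^ 2)) ∂(ν' x y) < ∞) :
    ((∀ x y : EuclideanSpace ℝ (Fin d), ∀ f : EuclideanSpace ℝ (Fin d) → ℝ, IsCb2 f →
        Lcouple b ν' (fun p => f p.1) x y = Lop ν b f x) ∧
      (∀ x y : EuclideanSpace ℝ (Fin d), ∀ g : EuclideanSpace ℝ (Fin d) → ℝ, IsCb2 g →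
        Lcouple b ν' (fun p => g p.2) x y = Lop ν b g y))
    ↔ (∀ x y : EuclideanSpace ℝ (Fin d), ∀ A B : Set (EuclideanSpace ℝ (Fin d)),
        MeasurableSet A → MeasurableSet B →
        (0 : EuclideanSpace ℝ (Fin d)) ∉ A → (0 : EuclideanSpace ℝ (Fin d)) ∉ B →
        ν' x y (A ×ˢ Set.univ) = ν A ∧ ν' x y (Set.univ ×ˢ B) = ν B) := by
  simp only [forall_Lcouple_comp_fst_eq_Lop_iff hν2 (hν'2 _ _),
    forall_Lcouple_comp_snd_eq_Lop_iff hν2 (hν'2 _ _)]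
  constructor
  · rintro ⟨hfst, hsnd⟩ x y A B hA hB hA0 hB0
    exact ⟨hfst x y A hA hA0, hsnd x y B hB hB0⟩
  · intro h
    exact ⟨fun x y A hA hA0 ↦ (h x y A A hA hA hA0 hA0).1,
      fun x y B hB hB0 ↦ (h x y B B hB hB hB0 hB0).2⟩
end

section
/- Let d ≥ 1, let ν be a Lévy measure on ℝ^d, let ι be a countable index set, let (ν_i)_{i∈ι} be Borel measures on ℝ^d with ∑_{i∈ι} ν_i ≤ ν, and let Ψ_i : ℝ^d → ℝ^d be bijections such that Ψ_i and Ψ_i⁻¹ are Borel measurable. Set μ_{ν_i,Ψ_i} := ν_i ⊓ (ν_i∘Ψ_i). Then ∑_{i∈ι} μ_{ν_i,Ψ_i} ≤ ν, and if moreover ∑_{i∈ι} μ_{ν_i,Ψ_i} = ∑_{i∈ι} μ_{ν_i,Ψ_i⁻¹}, then the Borel measure on ℝ^d × ℝ^d defined by ν̃ := ∑_{i∈ι} (μ_{ν_i,Ψ_i}).map(u ↦ (u, Ψ_i(u))) + (ν − ∑_{i∈ι} μ_{ν_i,Ψ_i}).map(u ↦ (u,u)) has both marginals equal to ν, i.e.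 ν̃(A × ℝ^d) = ν(A) and ν̃(ℝ^d × B) = ν(B) for all Borel sets A, B ⊆ ℝ^d. -/
open MeasureTheory
open scoped ENNReal

/-!
Each `Ψ i` carries the overlap `ν_i ⊓ ν_i∘Ψ_i` to `ν_i ⊓ ν_i∘Ψ_i⁻¹`, because pushing forward
along a bimeasurable bijection is an order isomorphism and so commutes with infima. The
symmetry assumption therefore says that the mass moved along the graphs of the `Ψ i` arrives with
the same total distribution as it left with; adding back the mass that stays on the diagonal gives
`ν` in both coordinates.
-/

section

variable {α β ι : Type*} [MeasurableSpace α] [MeasurableSpace β]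

theorem measure_sum_mono {μ ν : ι → Measure α} (h : ∀ i, μ i ≤ ν i) :
    Measure.sum μ ≤ Measure.sum ν :=
  Measure.le_iff.2 fun s hs => by
    simpa only [Measure.sum_apply _ hs] using ENNReal.tsum_le_tsum fun i => h i s

theorem measure_sub_add_cancel_of_le {μ ν : Measure α} [SigmaFinite μ] (h : μ ≤ ν) :
    ν - μ + μ = ν := by
  refine (Measure.ext_iff_of_iUnion_eq_univ (iUnion_spanningSets μ)).2 fun n => ?_
  have : IsFiniteMeasure (μ.restrict (spanningSets μ n)) :=
    isFiniteMeasure_restrict.2 (measure_spanningSets_lt_top μ n).ne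
  rw [Measure.restrict_add,
    Measure.restrict_sub_eq_restrict_sub_restrict (measurableSet_spanningSets μ n),
    Measure.sub_add_cancel_of_le (Measure.restrict_mono le_rfl h)]

theorem gc_measure_map_symm_map (e : α ≃ᵐ β) :
    GaloisConnection (Measure.map e.symm) (Measure.map e) := fun μ ν =>
  ⟨fun h => by simpa only [e.map_map_symm] using Measure.map_mono h e.measurable,
    fun h => by simpa only [e.map_symm_map] using Measure.map_mono h e.symm.measurable⟩

theorem map_inf_map_symm (μ : Measure α) (ν : Measure β) (e : α ≃ᵐ β) :
    (μ ⊓ ν.map e.symm).map e = μ.map e ⊓ ν := by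
  rw [(gc_measure_map_symm_map e).u_inf, e.map_map_symm]

/-- The measure on `α × α` that moves the part `μ i` of `ν` along the graph of `f i`, for every `i`,
and leaves the rest of `ν` on the diagonal. It is meant for `Measure.sum μ ≤ ν`, since subtraction
of measures is truncated. -/
noncomputable def graphCoupling (ν : Measure α) (μ : ι → Measure α) (f : ι → α → α) :
    Measure (α × α) :=
  Measure.sum (fun i => (μ i).map (fun u => (u, f i u)))
    + (ν - Measure.sum μ).map (fun u => (u, u))

section graphCoupling

variable {ν : Measure α} {μ : ι → Measure α} [SigmaFinite (Measure.sum μ)] {f : ι → α → α}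

theorem fst_graphCoupling (hf : ∀ i, Measurable (f i)) (hμ : Measure.sum μ ≤ ν) :
    (graphCoupling ν μ f).fst = ν := by
  have fst_graph (i : ι) : ((μ i).map (fun u => (u, f i u))).map Prod.fst = μ i :=
    (Measure.fst_map_prodMk (hf i)).trans Measure.map_id
  have fst_diag : ((ν - Measure.sum μ).map (fun u => (u, u))).fst = ν - Measure.sum μ :=
    (Measure.fst_map_prodMk measurable_id).trans Measure.map_id
  rw [graphCoupling, Measure.fst_add, fst_diag, Measure.fst,
    Measure.map_sum measurable_fst.aemeasurable]
  simp only [fst_graph]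
  rw [add_comm, measure_sub_add_cancel_of_le hμ]

theorem snd_graphCoupling (hμ : Measure.sum μ ≤ ν)
    (hbalance : Measure.sum (fun i => (μ i).map (f i)) = Measure.sum μ) :
    (graphCoupling ν μ f).snd = ν := by
  have snd_graph (i : ι) : ((μ i).map (fun u => (u, f i u))).map Prod.snd = (μ i).map (f i) :=
    Measure.snd_map_prodMk measurable_id
  have snd_diag : ((ν - Measure.sum μ).map (fun u => (u, u))).snd = ν - Measure.sum μ :=
    (Measure.snd_map_prodMk measurable_id).trans Measure.map_id
  rw [graphCoupling, Measure.snd_add, snd_diag, Measure.snd,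
    Measure.map_sum measurable_snd.aemeasurable]
  simp only [snd_graph]
  rw [hbalance, add_comm, measure_sub_add_cancel_of_le hμ]

end graphCoupling

section

variable {ρ : Measure (α × β)}

theorem measure_prod_univ_of_fst_eq {ν : Measure α} {A : Set α} (hA : MeasurableSet A)
    (h : ρ.fst = ν) : ρ (A ×ˢ Set.univ) = ν A := by
  rw [← h, Measure.fst_apply hA, Set.prod_univ]

theorem measure_univ_prod_of_snd_eq {ν : Measure β} {B : Set β} (hB : MeasurableSet B)
    (h : ρ.snd = ν) : ρ (Set.univ ×ˢ B) = ν B := by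
  rw [← h, Measure.snd_apply hB, Set.univ_prod]

end

theorem stmt_1_general (ν : Measure α) (νi : ι → Measure α) [SigmaFinite (Measure.sum νi)]
    (Ψ : ι → α ≃ᵐ α) (hsum : Measure.sum νi ≤ ν) :
    Measure.sum (fun i => νi i ⊓ (νi i).map (Ψ i).symm) ≤ ν ∧
    (Measure.sum (fun i => νi i ⊓ (νi i).map (Ψ i).symm)
        = Measure.sum (fun i => νi i ⊓ (νi i).map (Ψ i)) →
      (graphCoupling ν (fun i => νi i ⊓ (νi i).map (Ψ i).symm) (fun i => Ψ i)).fst = ν ∧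
      (graphCoupling ν (fun i => νi i ⊓ (νi i).map (Ψ i).symm) (fun i => Ψ i)).snd = ν) := by
  have hoverlap : Measure.sum (fun i => νi i ⊓ (νi i).map (Ψ i).symm) ≤ Measure.sum νi :=
    measure_sum_mono fun i => inf_le_left
  have : SigmaFinite (Measure.sum (fun i => νi i ⊓ (νi i).map (Ψ i).symm)) :=
    Measure.sigmaFinite_of_le _ hoverlap
  refine ⟨hoverlap.trans hsum, fun hsymm => ⟨?_, ?_⟩⟩
  · exact fst_graphCoupling (fun i => (Ψ i).measurable) (hoverlap.trans hsum)
  · have map_overlap (i : ι) :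
        (νi i ⊓ (νi i).map (Ψ i).symm).map (Ψ i) = νi i ⊓ (νi i).map (Ψ i) := by
      rw [map_inf_map_symm, inf_comm]
    refine snd_graphCoupling (hoverlap.trans hsum) ?_
    simp only [map_overlap, hsymm]

end

/-- For a Lévy measure `ν`, a countable family of measures `ν_i` with `∑ ν_i ≤ ν` and
bi-measurable bijections `Ψ_i`, setting `μ_i := ν_i ⊓ (ν_i ∘ Ψ_i)` (with
`ν_i ∘ Ψ_i = (ν_i).map Ψ_i⁻¹`), one has `∑ μ_i ≤ ν`; and if moreover
`∑ (ν_i ⊓ ν_i∘Ψ_i) = ∑ (ν_i ⊓ ν_i∘Ψ_i⁻¹)`, then the measure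
`ν̃ = ∑ μ_i.map (u ↦ (u, Ψ_i u)) + (ν - ∑ μ_i).map (u ↦ (u,u))` on `ℝ^d × ℝ^d`
has both marginals equal to `ν`. -/
theorem stmt_1 {d : ℕ} (hd : 1 ≤ d) (ν : Measure (EuclideanSpace ℝ (Fin d)))
    [SigmaFinite ν] (hν0 : ν {0} = 0)
    (hν2 : ∫⁻ z, ENNReal.ofReal (min 1 (‖z‖ ^ 2)) ∂ν < ∞)
    {ι : Type*} [Countable ι]
    (νi : ι → Measure (EuclideanSpace ℝ (Fin d)))
    (Ψ Ψinv : ι → EuclideanSpace ℝ (Fin d) → EuclideanSpace ℝ (Fin d))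
    (hΨm : ∀ i, Measurable (Ψ i)) (hΨim : ∀ i, Measurable (Ψinv i))
    (hleft : ∀ i, Function.LeftInverse (Ψinv i) (Ψ i))
    (hright : ∀ i, Function.RightInverse (Ψinv i) (Ψ i))
    (hsum : Measure.sum νi ≤ ν) :
    Measure.sum (fun i => νi i ⊓ (νi i).map (Ψinv i)) ≤ ν ∧
    (Measure.sum (fun i => νi i ⊓ (νi i).map (Ψinv i))
        = Measure.sum (fun i => νi i ⊓ (νi i).map (Ψ i)) →
      ∀ A B : Set (EuclideanSpace ℝ (Fin d)), MeasurableSet A → MeasurableSet B →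
        (Measure.sum (fun i => ((νi i ⊓ (νi i).map (Ψinv i)).map (fun u => (u, Ψ i u))))
            + (ν - Measure.sum (fun i => νi i ⊓ (νi i).map (Ψinv i))).map (fun u => (u, u)))
          (A ×ˢ Set.univ) = ν A ∧
        (Measure.sum (fun i => ((νi i ⊓ (νi i).map (Ψinv i)).map (fun u => (u, Ψ i u))))
            + (ν - Measure.sum (fun i => νi i ⊓ (νi i).map (Ψinv i))).map (fun u => (u, u)))
          (Set.univ ×ˢ B) = ν B) := by
  have : SigmaFinite (Measure.sum νi) := Measure.sigmaFinite_of_le ν hsum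
  exact (stmt_1_general ν νi (fun i => ⟨⟨Ψ i, Ψinv i, hleft i, hright i⟩, hΨm i, hΨim i⟩)
    hsum).imp_right fun hmarginals hsymm _ _ hA hB => (hmarginals hsymm).imp
      (measure_prod_univ_of_fst_eq hA) (measure_univ_prod_of_snd_eq hB)
end

section
/- (Lemma 3.2 of the paper.) Let d ≥ 1, let ν be a rotationally symmetric Lévy measure on ℝ^d, let b : ℝ^d → ℝ^d be any function, and let f : ℝ → ℝ be continuous on [0,2], twice continuously differentiable on (0,2], with f(0) = 0, f' ≥ 0 on (0,2], f'' ≤ 0 on (0,2], and f'' nondecreasing on (0,2]. Let x, y ∈ ℝ^d with 0 < |x−y| ≤ 1, and write r := |x−y|. Then the function z ↦ f(|x−y+z−R_{x,y}(z)|) − f(r) − f'(r)·(⟨x−y,z⟩/r)·1_{(0,1)}(|z|) + f'(r)·(⟨x−y,R_{x,y}(z)⟩/r)·1_{(0,1)}(|R_{x,y}(z)|) is ν-integrable on {z : |z| ≤ r/2}, the integral ∫_{|z| ≤ r/2} |z|² ν(dz) is finite, and f'(r)·⟨b(x)−b(y), x−y⟩/r + ∫_{|z| ≤ r/2} [f(|x−y+z−R_{x,y}(z)|)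 − f(r) − f'(r)·(⟨x−y,z⟩/r)·1_{(0,1)}(|z|) + f'(r)·(⟨x−y,R_{x,y}(z)⟩/r)·1_{(0,1)}(|R_{x,y}(z)|)] ν(dz) ≤ f'(r)·⟨b(x)−b(y), x−y⟩/r + (2/d)·f''(2r)·∫_{|z| ≤ r/2} |z|² ν(dz). -/
open MeasureTheory
open scoped RealInnerProductSpace ENNReal

/-- The reflection `R_{x,y}(z) = z - (2⟨x-y,z⟩/|x-y|²)(x-y)`. -/
noncomputable def reflect {d : ℕ} (x y z : EuclideanSpace ℝ (Fin d)) :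
    EuclideanSpace ℝ (Fin d) :=
  z - (2 * ⟪x - y, z⟫ / ‖x - y‖ ^ 2) • (x - y)

/-!
On `{|z| ≤ r/2}` the vector `x - y + z - R z` is a nonnegative multiple of `x - y`, of length
`r + h` with `h = 2⟨x - y, z⟩/r`. The reflected compensator is the negative of the original one, so
the integrand is the first-order Taylor remainder `f (r + h) - f r - f' r * h` with `|h| ≤ r`. Since
`f'' ≤ f'' (2r)` on `(0, 2r)`, it is at most `f'' (2r) / 2 * h²`; near `h = 0` it is `O(h²)`, which
gives integrability. By rotational symmetry `∫ ⟨v, z⟩² = |v|²/d ∫ |z|²`, and here `h = ⟨v, z⟩` with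
`|v| = 2`.
-/

open Asymptotics Filter Metric Set Topology

section Asymptotics

variable {X F G : Type*} [TopologicalSpace X] [NormedAddCommGroup F] [NormedAddCommGroup G]
  {φ : X → F} {ψ : X → G} {K : Set X}

lemma isBigO_principal_of_forall_nhdsWithin (hK : IsCompact K)
    (h : ∀ x ∈ K, φ =O[𝓝[K] x] ψ) : φ =O[𝓟 K] ψ := by
  refine hK.induction_on (p := fun s ↦ φ =O[𝓟 s] ψ) (by simp) (fun s t hst ht ↦ ?_)
    (fun s t hs ht ↦ ?_) (fun x hx ↦ ?_)
  · exact ht.mono (principal_mono.2 hst)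
  · simpa only [sup_principal] using hs.sup ht
  · obtain ⟨C, hC⟩ := (h x hx).bound
    exact ⟨_, hC, isBigO_principal.2 ⟨C, fun _ hz ↦ hz⟩⟩

lemma isBigO_principal_of_continuousOn_of_ne_zero (hK : IsCompact K) {a : X}
    (hφ : ContinuousOn φ K) (hψ : ContinuousOn ψ K) (hψ0 : ∀ x ∈ K, x ≠ a → ψ x ≠ 0)
    (ha : φ =O[𝓝[K] a] ψ) : φ =O[𝓟 K] ψ := by
  refine isBigO_principal_of_forall_nhdsWithin hK fun x hx ↦ ?_
  obtain rfl | hxa := eq_or_ne x a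
  · exact ha
  · have hψx : 0 < ‖ψ x‖ := norm_pos_iff.2 (hψ0 x hx hxa)
    have hone_ψ : (fun _ ↦ (1 : ℝ)) =O[𝓝[K] x] ψ :=
      (isBigO_const_left_iff_pos_le_norm one_ne_zero).2
        ⟨‖ψ x‖ / 2, half_pos hψx, (hψ x hx).norm.eventually_const_le (half_lt_self hψx)⟩
    exact ((hφ x hx).isBigO_one ℝ).trans hone_ψ

end Asymptotics

section TangentRemainder

lemma hasDerivAt_of_hasDerivWithinAt_Ioc {g g' : ℝ → ℝ} {a b : ℝ}
    (hg : ∀ s ∈ Ioc a b, HasDerivWithinAt g (g' s) (Ioc a b) s) (s : ℝ) (hs : s ∈ Ioo a b) :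
    HasDerivAt g (g' s) s :=
  (hg s (Ioo_subset_Ioc_self hs)).hasDerivAt (Ioc_mem_nhds hs.1 hs.2)

/-- The remainder of `f` at `r + h` after subtracting the affine function of slope `m` through
`(r, f r)`. For `m = f' r` it is the first-order Taylor remainder as a function of the
increment `h`. -/
def tangentRemainder (f : ℝ → ℝ) (m r h : ℝ) : ℝ := f (r + h) - f r - m * h

variable {f f' f'' : ℝ → ℝ} {c m r h : ℝ}

lemma hasDerivAt_tangentRemainder {m' : ℝ} (hf : HasDerivAt f m' (r + h)) :
    HasDerivAt (tangentRemainder f m r) (m' - m) h := by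
  have hlin : HasDerivAt (fun h ↦ m * h) m h := by
    simpa using (hasDerivAt_id h).const_mul m
  exact ((hf.comp_const_add r h).sub_const (f r)).sub hlin

lemma continuousOn_tangentRemainder {s t : Set ℝ} (hf : ContinuousOn f s)
    (hst : MapsTo (r + ·) t s) : ContinuousOn (tangentRemainder f m r) t := by
  have hshift : ContinuousOn (fun h ↦ f (r + h)) t := hf.comp (by fun_prop) hst
  exact (hshift.sub continuousOn_const).sub (by fun_prop)

lemma isBigO_tangentRemainder_sq (hf : ∀ᶠ s in 𝓝 r, HasDerivAt f (f' s) s)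
    (hf' : HasDerivAt f' c r) :
    tangentRemainder f (f' r) r =O[𝓝 0] fun h ↦ h ^ 2 := by
  have hshift : Tendsto (r + ·) (𝓝 0) (𝓝 r) := by
    simpa using (continuous_const_add r).tendsto 0
  obtain ⟨C, hC0, hC⟩ := hf'.isBigO_sub.exists_nonneg
  obtain ⟨ε, hε, hball⟩ := eventually_nhds_iff_ball.1 (hshift.eventually (hf.and hC.bound))
  refine IsBigO.of_bound C (eventually_nhds_iff_ball.2 ⟨ε, hε, fun h hh ↦ ?_⟩)
  have hsub : closedBall (0 : ℝ) |h| ⊆ ball 0 ε := closedBall_subset_ball (by simpa using hh)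
  have hderiv_le : ∀ k ∈ closedBall (0 : ℝ) |h|, ‖f' (r + k) - f' r‖ ≤ C * |h| := by
    intro k hk
    have hkh : |k| ≤ |h| := by simpa using hk
    calc ‖f' (r + k) - f' r‖ ≤ C * |k| := by simpa using (hball k (hsub hk)).2
      _ ≤ C * |h| := by gcongr
  have hmvt := (convex_closedBall (0 : ℝ) |h|).norm_image_sub_le_of_norm_hasDerivWithin_le
    (fun k hk ↦ (hasDerivAt_tangentRemainder (m := f' r) (hball k (hsub hk)).1).hasDerivWithinAt)
    hderiv_le (mem_closedBall_self (abs_nonneg h)) (y := h) (by simp)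
  calc ‖tangentRemainder f (f' r) r h‖ ≤ C * |h| * ‖h‖ := by
        simpa [tangentRemainder] using hmvt
    _ = C * ‖h ^ 2‖ := by rw [norm_pow, Real.norm_eq_abs]; ring

lemma le_tangent_of_concaveOn {D : Set ℝ} {s : ℝ} (hf : ConcaveOn ℝ D f) (hr : r ∈ D) (hs : s ∈ D)
    (hfr : HasDerivAt f m r) : f s ≤ f r + m * (s - r) := by
  obtain hsr | rfl | hrs := lt_trichotomy s r
  · have hslope := hf.le_slope_of_hasDerivAt hs hr hsr hfr
    rw [slope_def_field, le_div_iff₀ (sub_pos.2 hsr)] at hslope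
    linarith
  · simp
  · have hslope := hf.slope_le_of_hasDerivAt hr hs hrs hfr
    rw [slope_def_field, div_le_iff₀ (sub_pos.2 hrs)] at hslope
    linarith

lemma tangentRemainder_le_of_deriv2_le {D : Set ℝ} (hD : Convex ℝ D) (hf : ContinuousOn f D)
    (hf' : ∀ s ∈ interior D, HasDerivAt f (f' s) s)
    (hf'' : ∀ s ∈ interior D, HasDerivAt f' (f'' s) s) (hc : ∀ s ∈ interior D, f'' s ≤ c)
    (hr : r ∈ interior D) (hh : r + h ∈ D) :
    tangentRemainder f (f' r) r h ≤ c / 2 * h ^ 2 := by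
  set g : ℝ → ℝ := fun s ↦ f s - c / 2 * (s - r) ^ 2
  have hquad (s : ℝ) : HasDerivAt (fun s ↦ c / 2 * (s - r) ^ 2) (c * (s - r)) s := by
    refine ((((hasDerivAt_id s).sub_const r).pow 2).const_mul (c / 2)).congr_deriv ?_
    simp only [id, Nat.cast_ofNat]
    ring
  have hlin (s : ℝ) : HasDerivAt (fun s ↦ c * (s - r)) c s := by
    simpa using ((hasDerivAt_id s).sub_const r).const_mul c
  have hg : ConcaveOn ℝ D g :=
    concaveOn_of_hasDerivWithinAt2_nonpos hD (hf.sub (by fun_prop))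
      (fun s hs ↦ ((hf' s hs).sub (hquad s)).hasDerivWithinAt)
      (fun s hs ↦ ((hf'' s hs).sub (hlin s)).hasDerivWithinAt)
      (fun s hs ↦ sub_nonpos.2 (hc s hs))
  have hgr : HasDerivAt g (f' r) r := ((hf' r hr).sub (hquad r)).congr_deriv (by simp)
  have htangent := le_tangent_of_concaveOn hg (interior_subset hr) hh hgr
  simp only [g, add_sub_cancel_left, sub_self] at htangent
  unfold tangentRemainder
  linarith

lemma tangentRemainder_le_of_monotoneOn_deriv2 {R : ℝ} (hf : ContinuousOn f (Icc 0 R))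
    (hf' : ∀ s ∈ Ioo 0 R, HasDerivAt f (f' s) s) (hf'' : ∀ s ∈ Ioo 0 R, HasDerivAt f' (f'' s) s)
    (hf''mono : MonotoneOn f'' (Ioc 0 R)) (hr : 0 < r) (hrR : 2 * r ≤ R) (hh : h ∈ Icc (-r) r) :
    tangentRemainder f (f' r) r h ≤ f'' (2 * r) / 2 * h ^ 2 := by
  have hinterior : interior (Icc 0 (2 * r)) = Ioo 0 (2 * r) := interior_Icc
  have hsub : Ioo 0 (2 * r) ⊆ Ioo 0 R := Ioo_subset_Ioo_right hrR
  refine tangentRemainder_le_of_deriv2_le (convex_Icc 0 (2 * r))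
    (hf.mono (Icc_subset_Icc_right hrR)) (hinterior ▸ fun s hs ↦ hf' s (hsub hs))
    (hinterior ▸ fun s hs ↦ hf'' s (hsub hs)) (hinterior ▸ fun s hs ↦ ?_)
    (hinterior ▸ ⟨hr, by linarith⟩) ⟨by linarith [hh.1], by linarith [hh.2]⟩
  exact hf''mono (Ioo_subset_Ioc_self (hsub hs)) ⟨by positivity, hrR⟩ hs.2.le

end TangentRemainder

section SecondMoment

variable {E : Type*} [NormedAddCommGroup E] [MeasurableSpace E] [BorelSpace E] {ν : Measure E}
  {ρ : ℝ}

lemma measurableSet_norm_le (ρ : ℝ) : MeasurableSet {z : E | ‖z‖ ≤ ρ} :=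
  measurableSet_le measurable_norm measurable_const

lemma setLIntegral_norm_sq_lt_top (hν : ∫⁻ z, ENNReal.ofReal (min 1 (‖z‖ ^ 2)) ∂ν < ∞)
    (hρ : ρ ≤ 1) : ∫⁻ z in {z | ‖z‖ ≤ ρ}, ENNReal.ofReal (‖z‖ ^ 2) ∂ν < ∞ := by
  refine lt_of_le_of_lt ?_ hν
  calc ∫⁻ z in {z | ‖z‖ ≤ ρ}, ENNReal.ofReal (‖z‖ ^ 2) ∂ν
      = ∫⁻ z in {z | ‖z‖ ≤ ρ}, ENNReal.ofReal (min 1 (‖z‖ ^ 2)) ∂ν :=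
        setLIntegral_congr_fun (measurableSet_norm_le ρ) fun z hz ↦ by
          rw [min_eq_right (pow_le_one₀ (norm_nonneg z) (le_trans hz hρ))]
    _ ≤ ∫⁻ z, ENNReal.ofReal (min 1 (‖z‖ ^ 2)) ∂ν := setLIntegral_le_lintegral _ _

lemma integrable_norm_sq_of_lintegral_lt_top
    (hν : ∫⁻ z, ENNReal.ofReal (‖z‖ ^ 2) ∂ν < ∞) : Integrable (fun z ↦ ‖z‖ ^ 2) ν :=
  ⟨(by fun_prop : Continuous _).aestronglyMeasurable,
    (hasFiniteIntegral_iff_ofReal (ae_of_all _ fun _ ↦ by positivity)).2 hν⟩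

variable [InnerProductSpace ℝ E]

lemma integrable_inner_sq (hν : Integrable (fun z ↦ ‖z‖ ^ 2) ν) (v : E) :
    Integrable (fun z ↦ ⟪v, z⟫ ^ 2) ν := by
  refine (hν.const_mul (‖v‖ ^ 2)).mono' (by fun_prop : Continuous _).aestronglyMeasurable
    (ae_of_all _ fun z ↦ ?_)
  rw [norm_pow, ← mul_pow]
  gcongr
  exact norm_inner_le_norm v z

lemma integrableOn_comp_inner {φ : ℝ → ℝ} {v : E} {δ : ℝ}
    (hν : IntegrableOn (fun z ↦ ‖z‖ ^ 2) {z | ‖z‖ ≤ ρ} ν) (hφ : ContinuousOn φ (Icc (-δ) δ))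
    (hφ0 : φ =O[𝓝 0] fun h ↦ h ^ 2) (hv : ∀ z, ‖z‖ ≤ ρ → ⟪v, z⟫ ∈ Icc (-δ) δ) :
    IntegrableOn (fun z ↦ φ ⟪v, z⟫) {z | ‖z‖ ≤ ρ} ν := by
  obtain ⟨C, hC⟩ := isBigO_principal.1 <| isBigO_principal_of_continuousOn_of_ne_zero isCompact_Icc
    hφ (by fun_prop) (fun h _ hh ↦ pow_ne_zero 2 hh) (hφ0.mono nhdsWithin_le_nhds)
  have hB : MeasurableSet {z : E | ‖z‖ ≤ ρ} := measurableSet_norm_le ρ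
  refine ((integrable_inner_sq hν v).const_mul C).mono'
    ((hφ.comp (by fun_prop) hv).aestronglyMeasurable hB)
    (ae_restrict_of_forall_mem hB fun z hz ↦ ?_)
  simpa using hC _ (hv z hz)

end SecondMoment

section RotationallySymmetric

variable {E : Type*} [NormedAddCommGroup E] [InnerProductSpace ℝ E] [MeasurableSpace E]
  [BorelSpace E] {μ : Measure E}

/-- A measure is rotationally symmetric if every linear isometry of the space onto itself
(reflections included) preserves it. -/
def IsRotationallySymmetric (μ : Measure E) : Prop := ∀ U : E ≃ₗᵢ[ℝ] E, μ.map U = μ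

lemma IsRotationallySymmetric.restrict_norm_le (hμ : IsRotationallySymmetric μ) (ρ : ℝ) :
    IsRotationallySymmetric (μ.restrict {z | ‖z‖ ≤ ρ}) := by
  intro U
  have hU : MeasurePreserving U μ μ := ⟨U.continuous.measurable, hμ U⟩
  have hpre : U ⁻¹' {z | ‖z‖ ≤ ρ} = {z | ‖z‖ ≤ ρ} := by ext z; simp
  simpa only [hpre] using (hU.restrict_preimage (measurableSet_norm_le ρ)).map_eq

lemma IsRotationallySymmetric.integral_inner_sq_eq (hμ : IsRotationallySymmetric μ) {u v : E}
    (huv : ‖u‖ = ‖v‖) : ∫ z, ⟪u, z⟫ ^ 2 ∂μ = ∫ z, ⟪v, z⟫ ^ 2 ∂μ := by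
  let U : E ≃ₗᵢ[ℝ] E := (ℝ ∙ (u - v))ᗮ.reflection
  have hU : MeasurePreserving U μ μ := ⟨U.continuous.measurable, hμ U⟩
  calc ∫ z, ⟪u, z⟫ ^ 2 ∂μ = ∫ z, ⟪U u, U z⟫ ^ 2 ∂μ := by simp only [U.inner_map_map]
    _ = ∫ z, ⟪v, U z⟫ ^ 2 ∂μ := by rw [Submodule.reflection_sub huv]
    _ = ∫ z, ⟪v, z⟫ ^ 2 ∂μ :=
      hU.integral_comp U.toHomeomorph.measurableEmbedding fun z ↦ ⟪v, z⟫ ^ 2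

lemma IsRotationallySymmetric.finrank_mul_integral_inner_sq [FiniteDimensional ℝ E]
    (hμ : IsRotationallySymmetric μ) (hsq : Integrable (fun z ↦ ‖z‖ ^ 2) μ) (v : E) :
    Module.finrank ℝ E * ∫ z, ⟪v, z⟫ ^ 2 ∂μ = ‖v‖ ^ 2 * ∫ z, ‖z‖ ^ 2 ∂μ := by
  let b := stdOrthonormalBasis ℝ E
  have hcoord (i) : ‖v‖ ^ 2 * ∫ z, ⟪b i, z⟫ ^ 2 ∂μ = ∫ z, ⟪v, z⟫ ^ 2 ∂μ := by
    rw [← integral_const_mul, ← hμ.integral_inner_sq_eq (u := ‖v‖ • b i) (by simp [norm_smul])]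
    simp only [real_inner_smul_left, mul_pow]
  calc Module.finrank ℝ E * ∫ z, ⟪v, z⟫ ^ 2 ∂μ
      = ∑ i, ‖v‖ ^ 2 * ∫ z, ⟪b i, z⟫ ^ 2 ∂μ := by simp [hcoord]
    _ = ‖v‖ ^ 2 * ∫ z, ∑ i, ⟪b i, z⟫ ^ 2 ∂μ := by
      rw [integral_finsetSum _ fun i _ ↦ integrable_inner_sq hsq (b i), Finset.mul_sum]
    _ = ‖v‖ ^ 2 * ∫ z, ‖z‖ ^ 2 ∂μ := by
      simp only [← b.sum_sq_norm_inner_right, Real.norm_eq_abs, sq_abs]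

lemma IsRotationallySymmetric.integral_le_of_le_mul_inner_sq [FiniteDimensional ℝ E] [Nontrivial E]
    (hμ : IsRotationallySymmetric μ) (hsq : Integrable (fun z ↦ ‖z‖ ^ 2) μ) {g : E → ℝ}
    (hg : Integrable g μ) {c : ℝ} {v : E} (hle : ∀ᵐ z ∂μ, g z ≤ c * ⟪v, z⟫ ^ 2) :
    ∫ z, g z ∂μ ≤ c * ‖v‖ ^ 2 / Module.finrank ℝ E * ∫ z, ‖z‖ ^ 2 ∂μ := by
  have hdim : (Module.finrank ℝ E : ℝ) ≠ 0 := Nat.cast_ne_zero.2 Module.finrank_pos.ne'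
  calc ∫ z, g z ∂μ ≤ ∫ z, c * ⟪v, z⟫ ^ 2 ∂μ :=
      integral_mono_ae hg ((integrable_inner_sq hsq v).const_mul c) hle
    _ = c * (‖v‖ ^ 2 * ∫ z, ‖z‖ ^ 2 ∂μ) / Module.finrank ℝ E := by
      rw [integral_const_mul, ← hμ.finrank_mul_integral_inner_sq hsq v]
      field_simp
    _ = c * ‖v‖ ^ 2 / Module.finrank ℝ E * ∫ z, ‖z‖ ^ 2 ∂μ := by ring

end RotationallySymmetric

section Reflection

variable {d : ℕ} (x y z : EuclideanSpace ℝ (Fin d))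

/-- The vector `v` of length `2` along `x - y`. When `y` jumps by `R_{x,y}(z)` as `x` jumps by
`z`, the distance `|x - y|` changes by `⟨v, z⟩`, as long as `z` is small. -/
noncomputable def gapGradient : EuclideanSpace ℝ (Fin d) := (2 / ‖x - y‖) • (x - y)

/-- The integrand of the nonlocal part of the coupling operator at `(x, y)`, applied to
`f(|x - y|)`, with `m` in place of `f'(|x - y|)`. -/
noncomputable def couplingIntegrand (f : ℝ → ℝ) (m : ℝ) : ℝ :=
  f ‖x - y + z - reflect x y z‖ - f ‖x - y‖
    - m * (⟪x - y, z⟫ / ‖x - y‖) * ind01 ‖z‖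
    + m * (⟪x - y, reflect x y z⟫ / ‖x - y‖) * ind01 ‖reflect x y z‖

lemma reflect_eq_reflection : reflect x y z = (ℝ ∙ (x - y))ᗮ.reflection z := by
  rw [Submodule.reflection_orthogonal_apply, Submodule.reflection_singleton_apply, neg_sub, reflect,
    mul_div_assoc, ← smul_smul, ofNat_smul_eq_nsmul]
  rfl

lemma norm_reflect : ‖reflect x y z‖ = ‖z‖ := by
  rw [reflect_eq_reflection, LinearIsometryEquiv.norm_map]

lemma inner_sub_reflect : ⟪x - y, reflect x y z⟫ = -⟪x - y, z⟫ := by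
  rw [reflect_eq_reflection, ← Submodule.reflection_symm, ← LinearIsometryEquiv.inner_map_eq_flip,
    Submodule.reflection_orthogonalComplement_singleton_eq_neg, inner_neg_left]

lemma inner_gapGradient : ⟪gapGradient x y, z⟫ = 2 * (⟪x - y, z⟫ / ‖x - y‖) := by
  rw [gapGradient, real_inner_smul_left]
  ring

variable {x y z}

lemma norm_gapGradient (hxy : x ≠ y) : ‖gapGradient x y‖ = 2 := by
  have hr : ‖x - y‖ ≠ 0 := norm_ne_zero_iff.2 (sub_ne_zero.2 hxy)
  rw [gapGradient, norm_smul, norm_div, norm_norm, div_mul_cancel₀ _ hr, Real.norm_ofNat]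

lemma inner_gapGradient_mem_Icc (hxy : x ≠ y) (hz : ‖z‖ ≤ ‖x - y‖ / 2) :
    ⟪gapGradient x y, z⟫ ∈ Icc (-‖x - y‖) ‖x - y‖ :=
  abs_le.1 <| calc
    |⟪gapGradient x y, z⟫| ≤ ‖gapGradient x y‖ * ‖z‖ := abs_real_inner_le_norm _ z
    _ ≤ 2 * (‖x - y‖ / 2) := by rw [norm_gapGradient hxy]; gcongr
    _ = ‖x - y‖ := mul_div_cancel₀ ‖x - y‖ two_ne_zero

lemma norm_sub_add_sub_reflect (hxy : x ≠ y) (hz : ‖z‖ ≤ ‖x - y‖ / 2) :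
    ‖x - y + z - reflect x y z‖ = ‖x - y‖ + ⟪gapGradient x y, z⟫ := by
  have hr : 0 < ‖x - y‖ := norm_pos_iff.2 (sub_ne_zero.2 hxy)
  have hsmul : x - y + z - reflect x y z
      = ((‖x - y‖ + ⟪gapGradient x y, z⟫) / ‖x - y‖) • (x - y) := by
    have hcoeff : (‖x - y‖ + ⟪gapGradient x y, z⟫) / ‖x - y‖
        = 1 + 2 * ⟪x - y, z⟫ / ‖x - y‖ ^ 2 := by
      rw [inner_gapGradient]
      field_simp
    rw [hcoeff, add_smul, one_smul, reflect]
    abel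
  have hnonneg : 0 ≤ ‖x - y‖ + ⟪gapGradient x y, z⟫ := by
    linarith [(inner_gapGradient_mem_Icc hxy hz).1]
  rw [hsmul, norm_smul, norm_div, norm_norm, div_mul_cancel₀ _ hr.ne', Real.norm_of_nonneg hnonneg]

lemma ind01_norm_of_ne_zero (hz0 : z ≠ 0) (hz : ‖z‖ < 1) : ind01 ‖z‖ = 1 :=
  indicator_of_mem (mem_Ioo.2 ⟨norm_pos_iff.2 hz0, hz⟩) _

lemma couplingIntegrand_eq_tangentRemainder (hxy : x ≠ y) (hr : ‖x - y‖ < 2)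
    (hz : ‖z‖ ≤ ‖x - y‖ / 2) (f : ℝ → ℝ) (m : ℝ) :
    couplingIntegrand x y z f m = tangentRemainder f m ‖x - y‖ ⟪gapGradient x y, z⟫ := by
  rw [couplingIntegrand, tangentRemainder, norm_sub_add_sub_reflect hxy hz, norm_reflect,
    inner_sub_reflect, inner_gapGradient]
  obtain rfl | hz0 := eq_or_ne z 0
  · simp
  · rw [ind01_norm_of_ne_zero hz0 (by linarith)]
    ring

end Reflection

theorem stmt_2_general {d : ℕ} (ν : Measure (EuclideanSpace ℝ (Fin d)))
    (hν2 : ∫⁻ z, ENNReal.ofReal (min 1 (‖z‖ ^ 2)) ∂ν < ∞) (hrot : IsRotationallySymmetric ν)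
    (b : EuclideanSpace ℝ (Fin d) → EuclideanSpace ℝ (Fin d)) (f f' f'' : ℝ → ℝ) {R : ℝ}
    (hf : ContinuousOn f (Icc 0 R))
    (hf' : ∀ s ∈ Ioo 0 R, HasDerivAt f (f' s) s)
    (hf'' : ∀ s ∈ Ioo 0 R, HasDerivAt f' (f'' s) s)
    (hf''mono : MonotoneOn f'' (Ioc 0 R))
    (x y : EuclideanSpace ℝ (Fin d)) (hxy : x ≠ y) (hrR : 2 * ‖x - y‖ ≤ R) (hr2 : ‖x - y‖ < 2) :
    IntegrableOn (fun z ↦ couplingIntegrand x y z f (f' ‖x - y‖)) {z | ‖z‖ ≤ ‖x - y‖ / 2} ν ∧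
    (∫⁻ z in {z | ‖z‖ ≤ ‖x - y‖ / 2}, ENNReal.ofReal (‖z‖ ^ 2) ∂ν) < ∞ ∧
    f' ‖x - y‖ * (⟪b x - b y, x - y⟫ / ‖x - y‖)
        + ∫ z in {z | ‖z‖ ≤ ‖x - y‖ / 2}, couplingIntegrand x y z f (f' ‖x - y‖) ∂ν
      ≤ f' ‖x - y‖ * (⟪b x - b y, x - y⟫ / ‖x - y‖)
        + (2 / (d : ℝ)) * f'' (2 * ‖x - y‖)
          * ∫ z in {z | ‖z‖ ≤ ‖x - y‖ / 2}, ‖z‖ ^ 2 ∂ν := by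
  have hr : 0 < ‖x - y‖ := norm_pos_iff.2 (sub_ne_zero.2 hxy)
  have : Nontrivial (EuclideanSpace ℝ (Fin d)) := ⟨x, y, hxy⟩
  have hB := measurableSet_norm_le (E := EuclideanSpace ℝ (Fin d)) (‖x - y‖ / 2)
  have hmoment := setLIntegral_norm_sq_lt_top hν2 (show ‖x - y‖ / 2 ≤ 1 by linarith)
  have hsq := integrable_norm_sq_of_lintegral_lt_top hmoment
  have hcongr : EqOn (fun z ↦ couplingIntegrand x y z f (f' ‖x - y‖))
      (fun z ↦ tangentRemainder f (f' ‖x - y‖) ‖x - y‖ ⟪gapGradient x y, z⟫)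
      {z | ‖z‖ ≤ ‖x - y‖ / 2} :=
    fun z hz ↦ couplingIntegrand_eq_tangentRemainder hxy hr2 hz f _
  have hcont : ContinuousOn (tangentRemainder f (f' ‖x - y‖) ‖x - y‖) (Icc (-‖x - y‖) ‖x - y‖) :=
    continuousOn_tangentRemainder hf fun h hh ↦ ⟨by linarith [hh.1], by linarith [hh.2]⟩
  have hrR' : ‖x - y‖ < R := by linarith
  have hO := isBigO_tangentRemainder_sq (eventually_of_mem (Ioo_mem_nhds hr hrR') hf')
    (hf'' _ ⟨hr, hrR'⟩)
  have hrem := integrableOn_comp_inner hsq hcont hO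
    fun z hz ↦ inner_gapGradient_mem_Icc hxy hz
  refine ⟨hrem.congr_fun hcongr.symm hB, hmoment, ?_⟩
  rw [setIntegral_congr_fun hB hcongr]
  gcongr
  refine ((hrot.restrict_norm_le _).integral_le_of_le_mul_inner_sq hsq hrem
    (ae_restrict_of_forall_mem hB fun z hz ↦ tangentRemainder_le_of_monotoneOn_deriv2 hf hf' hf''
      hf''mono hr hrR (inner_gapGradient_mem_Icc hxy hz))).trans_eq ?_
  rw [norm_gapGradient hxy, finrank_euclideanSpace_fin]
  ring

/-- Lemma 3.2: for a rotationally symmetric Lévy measure `ν`, any drift `b`, a concave-type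
test function `f ∈ C[0,2] ∩ C²(0,2]` with `f(0)=0`, `f' ≥ 0`, `f'' ≤ 0`, `f''`
nondecreasing, and `x ≠ y` with `r := |x-y| ≤ 1`, the coupling-by-reflection integrand is
`ν`-integrable on `{|z| ≤ r/2}`, the second moment `∫_{|z| ≤ r/2} |z|² ν(dz)` is finite,
and `L̃f(|x-y|) ≤ f'(r)⟨b(x)-b(y),x-y⟩/r + (2/d)·f''(2r)·∫_{|z| ≤ r/2} |z|² ν(dz)`. -/
theorem stmt_2 {d : ℕ} (hd : 1 ≤ d) (ν : Measure (EuclideanSpace ℝ (Fin d)))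
    [SigmaFinite ν] (hν0 : ν {0} = 0)
    (hν2 : ∫⁻ z, ENNReal.ofReal (min 1 (‖z‖ ^ 2)) ∂ν < ∞)
    (hrot : ∀ U : EuclideanSpace ℝ (Fin d) ≃ₗᵢ[ℝ] EuclideanSpace ℝ (Fin d),
      ν.map U = ν)
    (b : EuclideanSpace ℝ (Fin d) → EuclideanSpace ℝ (Fin d))
    (f f' f'' : ℝ → ℝ)
    (hf : ContinuousOn f (Set.Icc 0 2))
    (hf' : ∀ s ∈ Set.Ioc (0 : ℝ) 2, HasDerivWithinAt f (f' s) (Set.Ioc 0 2) s)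
    (hf'' : ∀ s ∈ Set.Ioc (0 : ℝ) 2, HasDerivWithinAt f' (f'' s) (Set.Ioc 0 2) s)
    (hf''cont : ContinuousOn f'' (Set.Ioc 0 2))
    (hf0 : f 0 = 0)
    (hf'nonneg : ∀ s ∈ Set.Ioc (0 : ℝ) 2, 0 ≤ f' s)
    (hf''nonpos : ∀ s ∈ Set.Ioc (0 : ℝ) 2, f'' s ≤ 0)
    (hf''mono : MonotoneOn f'' (Set.Ioc 0 2))
    (x y : EuclideanSpace ℝ (Fin d)) (hxy : x ≠ y) (hr : ‖x - y‖ ≤ 1) :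
    IntegrableOn (fun z => f ‖x - y + z - reflect x y z‖ - f ‖x - y‖
        - f' ‖x - y‖ * (⟪x - y, z⟫ / ‖x - y‖) * ind01 ‖z‖
        + f' ‖x - y‖ * (⟪x - y, reflect x y z⟫ / ‖x - y‖) * ind01 ‖reflect x y z‖)
      {z | ‖z‖ ≤ ‖x - y‖ / 2} ν ∧
    (∫⁻ z in {z | ‖z‖ ≤ ‖x - y‖ / 2}, ENNReal.ofReal (‖z‖ ^ 2) ∂ν) < ∞ ∧
    f' ‖x - y‖ * (⟪b x - b y, x - y⟫ / ‖x - y‖)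
        + ∫ z in {z | ‖z‖ ≤ ‖x - y‖ / 2}, (f ‖x - y + z - reflect x y z‖ - f ‖x - y‖
          - f' ‖x - y‖ * (⟪x - y, z⟫ / ‖x - y‖) * ind01 ‖z‖
          + f' ‖x - y‖ * (⟪x - y, reflect x y z⟫ / ‖x - y‖) * ind01 ‖reflect x y z‖) ∂ν
      ≤ f' ‖x - y‖ * (⟪b x - b y, x - y⟫ / ‖x - y‖)
        + (2 / (d : ℝ)) * f'' (2 * ‖x - y‖)
          * ∫ z in {z | ‖z‖ ≤ ‖x - y‖ / 2}, ‖z‖ ^ 2 ∂ν := by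
  exact stmt_2_general ν hν2 hrot b f f' f'' hf (hasDerivAt_of_hasDerivWithinAt_Ioc hf')
    (hasDerivAt_of_hasDerivWithinAt_Ioc hf'') hf''mono x y hxy (by linarith) (by linarith)
end

section
/- (Lemma 3.3 of the paper.) Let d ≥ 1, let ν be a Lévy measure on ℝ^d, let b : ℝ^d → ℝ^d be any function, let κ > 0, and let f : ℝ → ℝ be continuous on [0,2κ], twice continuously differentiable on (0,2κ], with f(0) = 0, f' ≥ 0, f'' ≤ 0, and f'' nondecreasing on (0,2κ]. Let x, y ∈ ℝ^d with 0 < |x−y| ≤ κ and write r := |x−y|. Then μ_{x−y}(ℝ^d) and μ_{y−x}(ℝ^d) are finite and equal, and f'(r)·⟨b(x)−b(y), x−y⟩/r − (1/2)·μ_{y−x}(ℝ^d)·f(r) + (1/2)·μ_{x−y}(ℝ^d)·(f(2r) − f(r)) ≤ f'(r)·⟨b(x)−b(y), x−y⟩/r + (1/2)·μ_{x−y}(ℝ^d)·r²·f''(2r). -/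
open MeasureTheory
open scoped RealInnerProductSpace ENNReal

/-- `μ_w = ν ⊓ (δ_w * ν)`, where `δ_w * ν` is the pushforward of `ν` under `z ↦ z + w`. -/
noncomputable def muTrans {d : ℕ} (ν : Measure (EuclideanSpace ℝ (Fin d)))
    (w : EuclideanSpace ℝ (Fin d)) : Measure (EuclideanSpace ℝ (Fin d)) :=
  ν ⊓ ν.map (fun z => z + w)

/-!
`z ↦ z - w` carries `ν ⊓ (δ_w * ν)` onto `(δ_{-w} * ν) ⊓ ν`, so the two overlaps have the same mass.
That mass is finite because `ν ⊓ (δ_w * ν)` is dominated by `ν` away from the origin and by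
`δ_w * ν` near it, where the translate only sees the part of `ν` of norm at least `‖w‖ / 2`.
Once the two masses agree, the claim is the bound `f (2r) - 2 f r + f 0 ≤ r² f''(2r)`, which holds
because `f'' ≤ f''(2r)` on `(0, 2r)`.
-/

section MeasureInf

variable {α β : Type*} [MeasurableSpace α] [MeasurableSpace β]

lemma map_measurableEquiv_inf (e : α ≃ᵐ β) (μ ν : Measure α) :
    (μ ⊓ ν).map e = μ.map e ⊓ ν.map e := by
  have map_le {ρ σ : Measure α} (h : ρ ≤ σ) : ρ.map e ≤ σ.map e := Measure.map_mono h e.measurable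
  refine le_antisymm (le_inf (map_le inf_le_left) (map_le inf_le_right)) ?_
  have symm_map_le {ρ : Measure β} {σ : Measure α} (h : ρ ≤ σ.map e) : ρ.map e.symm ≤ σ :=
    (Measure.map_mono h e.symm.measurable).trans_eq e.map_symm_map
  calc μ.map e ⊓ ν.map e = ((μ.map e ⊓ ν.map e).map e.symm).map e := e.map_map_symm.symm
    _ ≤ (μ ⊓ ν).map e := map_le (le_inf (symm_map_le inf_le_left) (symm_map_le inf_le_right))

lemma inf_apply_univ_le_add_compl (μ ν : Measure α) (s : Set α) :
    (μ ⊓ ν) Set.univ ≤ μ s + ν sᶜ :=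
  calc (μ ⊓ ν) Set.univ = (μ ⊓ ν) (s ∪ sᶜ) := by rw [Set.union_compl_self]
    _ ≤ (μ ⊓ ν) s + (μ ⊓ ν) sᶜ := measure_union_le s sᶜ
    _ ≤ μ s + ν sᶜ :=
      add_le_add (Measure.le_iff'.mp inf_le_left s) (Measure.le_iff'.mp inf_le_right sᶜ)

end MeasureInf

/-- The overlap `ν ⊓ (δ_w * ν)` of a measure on an additive group with its right translate by `w`;
for `ν` on `ℝ^d` it is `muTrans ν w`. -/
noncomputable def translationOverlap {G : Type*} [AddGroup G] [MeasurableSpace G]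
    (ν : Measure G) (w : G) : Measure G :=
  ν ⊓ ν.map (· + w)

section Translation

variable {G : Type*} [AddGroup G] [MeasurableSpace G] [MeasurableAdd G]

lemma map_add_right_neg_translationOverlap (ν : Measure G) (w : G) :
    (translationOverlap ν w).map (· + -w) = translationOverlap ν (-w) := by
  have translate_back : (ν.map (· + w)).map (· + -w) = ν := by
    rw [Measure.map_map (measurable_add_const _) (measurable_add_const _)]
    simp only [Function.comp_def, add_neg_cancel_right, Measure.map_id']
  calc (translationOverlap ν w).map (· + -w)
      = ν.map (· + -w) ⊓ (ν.map (· + w)).map (· + -w) :=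
        map_measurableEquiv_inf (MeasurableEquiv.addRight (-w)) ν (ν.map (· + w))
    _ = translationOverlap ν (-w) := by rw [translate_back, inf_comm, translationOverlap]

lemma translationOverlap_neg_univ (ν : Measure G) (w : G) :
    translationOverlap ν (-w) Set.univ = translationOverlap ν w Set.univ := by
  rw [← map_add_right_neg_translationOverlap,
    Measure.map_apply (measurable_add_const _) MeasurableSet.univ, Set.preimage_univ]

end Translation

section NormTails

variable {E : Type*} [SeminormedAddCommGroup E] [MeasurableSpace E] [OpensMeasurableSpace E]

lemma measure_norm_ge_lt_top_of_lintegral_min_one_norm_pow {ν : Measure E} {n : ℕ}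
    (hν : ∫⁻ z, ENNReal.ofReal (min 1 (‖z‖ ^ n)) ∂ν < ∞) {ε : ℝ} (hε : 0 < ε) :
    ν {z | ε ≤ ‖z‖} < ∞ := by
  have threshold_ne_zero : ENNReal.ofReal (min 1 (ε ^ n)) ≠ 0 :=
    (ENNReal.ofReal_pos.mpr (lt_min one_pos (pow_pos hε n))).ne'
  have integrand_measurable : Measurable fun z : E => ENNReal.ofReal (min 1 (‖z‖ ^ n)) := by
    fun_prop
  calc ν {z | ε ≤ ‖z‖}
      ≤ ν {z | ENNReal.ofReal (min 1 (ε ^ n)) ≤ ENNReal.ofReal (min 1 (‖z‖ ^ n))} := by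
        refine measure_mono fun z (hz : ε ≤ ‖z‖) => ?_
        simp only [Set.mem_ofPred_eq]
        gcongr
    _ ≤ (∫⁻ z, ENNReal.ofReal (min 1 (‖z‖ ^ n)) ∂ν) / ENNReal.ofReal (min 1 (ε ^ n)) :=
        meas_ge_le_lintegral_div integrand_measurable.aemeasurable threshold_ne_zero
          ENNReal.ofReal_ne_top
    _ < ∞ := ENNReal.div_lt_top hν.ne threshold_ne_zero

lemma translationOverlap_univ_lt_top [MeasurableAdd E] {ν : Measure E} {w : E}
    (hν : ν {z | ‖w‖ / 2 ≤ ‖z‖} < ∞) : translationOverlap ν w Set.univ < ∞ := by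
  set tail : Set E := {z | ‖w‖ / 2 ≤ ‖z‖}
  have tail_measurable : MeasurableSet tail :=
    (isClosed_le continuous_const continuous_norm).measurableSet
  have preimage_subset_tail : (· + w) ⁻¹' tailᶜ ⊆ tail := by
    intro z hz
    have near_origin : ‖z + w‖ < ‖w‖ / 2 := not_le.mp hz
    have norm_le : ‖w‖ ≤ ‖z + w‖ + ‖z‖ := by simpa using norm_sub_le (z + w) z
    change ‖w‖ / 2 ≤ ‖z‖
    linarith
  calc translationOverlap ν w Set.univ
      ≤ ν tail + ν.map (· + w) tailᶜ := inf_apply_univ_le_add_compl ..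
    _ = ν tail + ν ((· + w) ⁻¹' tailᶜ) := by
        rw [Measure.map_apply (measurable_add_const w) tail_measurable.compl]
    _ ≤ ν tail + ν tail := by gcongr
    _ < ∞ := ENNReal.add_lt_top.mpr ⟨hν, hν⟩

end NormTails

section SecondDifference

lemma strongConcaveOn_of_hasDerivWithinAt2_le_neg {D : Set ℝ} (hD : Convex ℝ D)
    {f f' f'' : ℝ → ℝ} {m : ℝ} (hf : ContinuousOn f D)
    (hf' : ∀ s ∈ interior D, HasDerivWithinAt f (f' s) (interior D) s)
    (hf'' : ∀ s ∈ interior D, HasDerivWithinAt f' (f'' s) (interior D) s)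
    (hm : ∀ s ∈ interior D, f'' s ≤ -m) : StrongConcaveOn D m f := by
  rw [strongConcaveOn_iff_convex]
  simp only [Real.norm_eq_abs, sq_abs]
  refine concaveOn_of_hasDerivWithinAt2_nonpos hD (f' := fun s => f' s + m * s)
    (f'' := fun s => f'' s + m) (hf.add (by fun_prop)) (fun s hs => ?_) (fun s hs => ?_)
    (fun s hs => by linarith [hm s hs])
  · have quadratic_deriv : HasDerivAt (fun t : ℝ => m / 2 * t ^ 2) (m * s) s :=
      ((hasDerivAt_pow 2 s).const_mul (m / 2)).congr_deriv (by push_cast; ring)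
    exact (hf' s hs).add quadratic_deriv.hasDerivWithinAt
  · exact (hf'' s hs).add (hasDerivAt_const_mul m).hasDerivWithinAt

lemma add_add_modulus_le_two_mul_midpoint {E : Type*} [NormedAddCommGroup E] [NormedSpace ℝ E]
    {s : Set E} {φ : ℝ → ℝ} {f : E → ℝ} (hf : UniformConcaveOn s φ f) {x y : E}
    (hx : x ∈ s) (hy : y ∈ s) :
    f x + f y + φ ‖x - y‖ / 2 ≤ 2 * f (midpoint ℝ x y) := by
  have concave_half := hf.2 hx hy one_half_pos.le one_half_pos.le (add_halves 1)
  have midpoint_eq : midpoint ℝ x y = (1 / 2 : ℝ) • x + (1 / 2 : ℝ) • y := by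
    rw [midpoint_eq_smul_add, invOf_eq_inv, smul_add, one_div]
  simp only [smul_eq_mul, ← midpoint_eq] at concave_half
  linarith

lemma forward_second_difference_le {f f' f'' : ℝ → ℝ} {a h c : ℝ} (hh : 0 ≤ h)
    (hf : ContinuousOn f (Set.Icc a (a + 2 * h)))
    (hf' : ∀ s ∈ Set.Ioo a (a + 2 * h), HasDerivWithinAt f (f' s) (Set.Ioo a (a + 2 * h)) s)
    (hf'' : ∀ s ∈ Set.Ioo a (a + 2 * h), HasDerivWithinAt f' (f'' s) (Set.Ioo a (a + 2 * h)) s)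
    (hc : ∀ s ∈ Set.Ioo a (a + 2 * h), f'' s ≤ c) :
    f (a + 2 * h) - 2 * f (a + h) + f a ≤ h ^ 2 * c := by
  have strongly_concave : StrongConcaveOn (Set.Icc a (a + 2 * h)) (-c) f := by
    apply strongConcaveOn_of_hasDerivWithinAt2_le_neg (convex_Icc _ _) hf (f' := f') (f'' := f'')
    all_goals simpa only [interior_Icc, neg_neg]
  have midpoint_eq : midpoint ℝ a (a + 2 * h) = a + h := by
    rw [midpoint_eq_smul_add, invOf_eq_inv, smul_eq_mul]
    ring
  have midpoint_bound := add_add_modulus_le_two_mul_midpoint strongly_concave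
    (Set.left_mem_Icc.mpr (by linarith)) (Set.right_mem_Icc.mpr (by linarith))
  rw [midpoint_eq, sub_add_cancel_left, norm_neg, Real.norm_eq_abs, sq_abs] at midpoint_bound
  linarith

lemma forward_second_difference_le_of_monotoneOn {f f' f'' : ℝ → ℝ} {a b h : ℝ} (hh : 0 < h)
    (hhb : a + 2 * h ≤ b) (hf : ContinuousOn f (Set.Icc a b))
    (hf' : ∀ s ∈ Set.Ioc a b, HasDerivWithinAt f (f' s) (Set.Ioc a b) s)
    (hf'' : ∀ s ∈ Set.Ioc a b, HasDerivWithinAt f' (f'' s) (Set.Ioc a b) s)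
    (hf''mono : MonotoneOn f'' (Set.Ioc a b)) :
    f (a + 2 * h) - 2 * f (a + h) + f a ≤ h ^ 2 * f'' (a + 2 * h) := by
  have Ioo_subset : Set.Ioo a (a + 2 * h) ⊆ Set.Ioc a b := fun s hs => ⟨hs.1, hs.2.le.trans hhb⟩
  have end_mem : a + 2 * h ∈ Set.Ioc a b := ⟨by linarith, hhb⟩
  exact forward_second_difference_le hh.le (hf.mono (Set.Icc_subset_Icc_right hhb))
    (fun s hs => (hf' s (Ioo_subset hs)).mono Ioo_subset)
    (fun s hs => (hf'' s (Ioo_subset hs)).mono Ioo_subset)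
    (fun s hs => hf''mono (Ioo_subset hs) end_mem hs.2.le)

end SecondDifference

theorem stmt_3_general {E : Type*} [NormedAddCommGroup E] [InnerProductSpace ℝ E]
    [MeasurableSpace E] [BorelSpace E] (ν : Measure E)
    (hν : ∫⁻ z, ENNReal.ofReal (min 1 (‖z‖ ^ 2)) ∂ν < ∞)
    (b : E → E) (κ : ℝ) (f f' f'' : ℝ → ℝ)
    (hf : ContinuousOn f (Set.Icc 0 (2 * κ)))
    (hf' : ∀ s ∈ Set.Ioc (0 : ℝ) (2 * κ), HasDerivWithinAt f (f' s) (Set.Ioc 0 (2 * κ)) s)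
    (hf'' : ∀ s ∈ Set.Ioc (0 : ℝ) (2 * κ), HasDerivWithinAt f' (f'' s) (Set.Ioc 0 (2 * κ)) s)
    (hf0 : 0 ≤ f 0)
    (hf''mono : MonotoneOn f'' (Set.Ioc 0 (2 * κ)))
    (x y : E) (hxy : x ≠ y) (hr : ‖x - y‖ ≤ κ) :
    translationOverlap ν (x - y) Set.univ < ∞ ∧
    translationOverlap ν (y - x) Set.univ < ∞ ∧
    translationOverlap ν (x - y) Set.univ = translationOverlap ν (y - x) Set.univ ∧
    f' ‖x - y‖ * (⟪b x - b y, x - y⟫ / ‖x - y‖)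
        - (1 / 2) * (translationOverlap ν (y - x) Set.univ).toReal * f ‖x - y‖
        + (1 / 2) * (translationOverlap ν (x - y) Set.univ).toReal
          * (f (2 * ‖x - y‖) - f ‖x - y‖)
      ≤ f' ‖x - y‖ * (⟪b x - b y, x - y⟫ / ‖x - y‖)
        + (1 / 2) * (translationOverlap ν (x - y) Set.univ).toReal * ‖x - y‖ ^ 2
          * f'' (2 * ‖x - y‖) := by
  have r_pos : 0 < ‖x - y‖ := norm_pos_iff.mpr (sub_ne_zero.mpr hxy)
  have mass_finite : translationOverlap ν (x - y) Set.univ < ∞ :=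
    translationOverlap_univ_lt_top
      (measure_norm_ge_lt_top_of_lintegral_min_one_norm_pow hν (half_pos r_pos))
  have mass_eq : translationOverlap ν (y - x) Set.univ = translationOverlap ν (x - y) Set.univ := by
    rw [← neg_sub x y, translationOverlap_neg_univ]
  rw [mass_eq]
  refine ⟨mass_finite, mass_finite, rfl, ?_⟩
  have increment_le : f (2 * ‖x - y‖) - 2 * f ‖x - y‖ ≤ ‖x - y‖ ^ 2 * f'' (2 * ‖x - y‖) := by
    have second_difference := forward_second_difference_le_of_monotoneOn r_pos
      (by linarith : 0 + 2 * ‖x - y‖ ≤ 2 * κ) hf hf' hf'' hf''mono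
    simp only [zero_add] at second_difference
    linarith
  have mass_mul_increment_le := mul_le_mul_of_nonneg_left increment_le
    (ENNReal.toReal_nonneg (a := translationOverlap ν (x - y) Set.univ))
  linarith

/-- Lemma 3.3: for a Lévy measure `ν`, any drift `b`, `κ > 0`, a concave-type test
function `f ∈ C[0,2κ] ∩ C²(0,2κ]` with `f(0)=0`, `f' ≥ 0`, `f'' ≤ 0`, `f''` nondecreasing,
and `x ≠ y` with `r := |x-y| ≤ κ`: the masses `μ_{x-y}(ℝ^d)` and `μ_{y-x}(ℝ^d)` are finite
and equal, and
`f'(r)⟨b(x)-b(y),x-y⟩/r - ½μ_{y-x}(ℝ^d)f(r) + ½μ_{x-y}(ℝ^d)(f(2r)-f(r))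
  ≤ f'(r)⟨b(x)-b(y),x-y⟩/r + ½μ_{x-y}(ℝ^d)·r²·f''(2r)`. -/
theorem stmt_3 {d : ℕ} (hd : 1 ≤ d) (ν : Measure (EuclideanSpace ℝ (Fin d)))
    [SigmaFinite ν] (hν0 : ν {0} = 0)
    (hν2 : ∫⁻ z, ENNReal.ofReal (min 1 (‖z‖ ^ 2)) ∂ν < ∞)
    (b : EuclideanSpace ℝ (Fin d) → EuclideanSpace ℝ (Fin d))
    (κ : ℝ) (hκ : 0 < κ)
    (f f' f'' : ℝ → ℝ)
    (hf : ContinuousOn f (Set.Icc 0 (2 * κ)))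
    (hf' : ∀ s ∈ Set.Ioc (0 : ℝ) (2 * κ), HasDerivWithinAt f (f' s) (Set.Ioc 0 (2 * κ)) s)
    (hf'' : ∀ s ∈ Set.Ioc (0 : ℝ) (2 * κ), HasDerivWithinAt f' (f'' s) (Set.Ioc 0 (2 * κ)) s)
    (hf''cont : ContinuousOn f'' (Set.Ioc 0 (2 * κ)))
    (hf0 : f 0 = 0)
    (hf'nonneg : ∀ s ∈ Set.Ioc (0 : ℝ) (2 * κ), 0 ≤ f' s)
    (hf''nonpos : ∀ s ∈ Set.Ioc (0 : ℝ) (2 * κ), f'' s ≤ 0)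
    (hf''mono : MonotoneOn f'' (Set.Ioc 0 (2 * κ)))
    (x y : EuclideanSpace ℝ (Fin d)) (hxy : x ≠ y) (hr : ‖x - y‖ ≤ κ) :
    (muTrans ν (x - y)) Set.univ < ∞ ∧
    (muTrans ν (y - x)) Set.univ < ∞ ∧
    (muTrans ν (x - y)) Set.univ = (muTrans ν (y - x)) Set.univ ∧
    f' ‖x - y‖ * (⟪b x - b y, x - y⟫ / ‖x - y‖)
        - (1 / 2) * ((muTrans ν (y - x)) Set.univ).toReal * f ‖x - y‖
        + (1 / 2) * ((muTrans ν (x - y)) Set.univ).toReal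
          * (f (2 * ‖x - y‖) - f ‖x - y‖)
      ≤ f' ‖x - y‖ * (⟪b x - b y, x - y⟫ / ‖x - y‖)
        + (1 / 2) * ((muTrans ν (x - y)) Set.univ).toReal * ‖x - y‖ ^ 2
          * f'' (2 * ‖x - y‖) := by
  exact stmt_3_general ν hν2 b κ f f' f'' hf hf' hf'' hf0.ge hf''mono x y hxy hr
end

section
/- Let d ≥ 1, let ν be a Lévy measure on ℝ^d and let x ∈ ℝ^d with x ≠ 0. Then the measure μ_x = ν ⊓ (δ_x * ν) is finite; more precisely, μ_x(ℝ^d) ≤ 2·ν({z ∈ ℝ^d : |z| ≥ |x|/2}) < ∞. -/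
open MeasureTheory
open scoped ENNReal

/-!
Let `A = {z | ‖x‖ / 2 ≤ ‖z‖}`. Dominate `ν ⊓ (δ_x * ν)` by `ν` on `A` and by `δ_x * ν` on `Aᶜ`.
Since `z` and `z + x` cannot both have norm less than `‖x‖ / 2`, translating `Aᶜ` back by `x` lands
in `A`, so each part has mass at most `ν A`. By Markov's inequality, `ν A` is finite.
-/

section Measure

variable {α : Type*} [MeasurableSpace α]

lemma measure_inf_univ_le_add_compl (μ ν : Measure α) {s : Set α} (hs : MeasurableSet s) :
    (μ ⊓ ν) Set.univ ≤ μ s + ν sᶜ :=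
  calc
    (μ ⊓ ν) Set.univ = (μ ⊓ ν) s + (μ ⊓ ν) sᶜ := (measure_add_measure_compl hs).symm
    _ ≤ μ s + ν sᶜ := add_le_add
      (Measure.le_iff'.mp inf_le_left s) (Measure.le_iff'.mp inf_le_right sᶜ)

lemma measure_inf_map_univ_le_two_mul (μ : Measure α) {f : α → α} (hf : Measurable f) {s : Set α}
    (hs : MeasurableSet s) (hfs : f ⁻¹' sᶜ ⊆ s) :
    (μ ⊓ μ.map f) Set.univ ≤ 2 * μ s :=
  calc
    (μ ⊓ μ.map f) Set.univ ≤ μ s + μ.map f sᶜ := measure_inf_univ_le_add_compl μ (μ.map f) hs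
    _ = μ s + μ (f ⁻¹' sᶜ) := by rw [Measure.map_apply hf hs.compl]
    _ ≤ μ s + μ s := by gcongr
    _ = 2 * μ s := (two_mul _).symm

lemma measure_ge_lt_top_of_lintegral_min_one_rpow_lt_top {μ : Measure α} {f : α → ℝ}
    (hf : AEMeasurable f μ) {p : ℝ} (hp : 0 ≤ p)
    (hfp : ∫⁻ a, ENNReal.ofReal (min 1 (f a ^ p)) ∂μ < ∞)
    {r : ℝ} (hr : 0 < r) :
    μ {a | r ≤ f a} < ∞ := by
  set ε := ENNReal.ofReal (min 1 (r ^ p))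
  have hε : ε ≠ 0 := (ENNReal.ofReal_pos.mpr (by positivity)).ne'
  have subset_superlevel :
      {a | r ≤ f a} ⊆ {a | ε ≤ ENNReal.ofReal (min 1 (f a ^ p))} := by
    intro a (ha : r ≤ f a)
    exact ENNReal.ofReal_le_ofReal (min_le_min_left 1 (Real.rpow_le_rpow hr.le ha hp))
  calc
    μ {a | r ≤ f a} ≤ μ {a | ε ≤ ENNReal.ofReal (min 1 (f a ^ p))} :=
      measure_mono subset_superlevel
    _ ≤ (∫⁻ a, ENNReal.ofReal (min 1 (f a ^ p)) ∂μ) / ε :=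
      meas_ge_le_lintegral_div (by fun_prop) hε ENNReal.ofReal_ne_top
    _ < ∞ := ENNReal.div_lt_top hfp.ne hε

end Measure

section SeminormedAddGroup

variable {E : Type*} [SeminormedAddGroup E]

lemma half_norm_le_norm_of_norm_add_lt {x z : E} (h : ‖z + x‖ < ‖x‖ / 2) : ‖x‖ / 2 ≤ ‖z‖ := by
  have triangle : ‖x‖ ≤ ‖z‖ + ‖z + x‖ := by
    simpa only [neg_add_cancel_left, norm_neg] using norm_add_le (-z) (z + x)
  linarith

variable [MeasurableSpace E] [OpensMeasurableSpace E] [MeasurableAdd E]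

lemma measure_inf_map_add_right_univ_le (ν : Measure E) (x : E) :
    (ν ⊓ ν.map (fun z => z + x)) Set.univ ≤ 2 * ν {z | ‖x‖ / 2 ≤ ‖z‖} :=
  measure_inf_map_univ_le_two_mul ν (measurable_add_const x)
    (measurableSet_le measurable_const continuous_norm.measurable)
    fun _ hz => half_norm_le_norm_of_norm_add_lt (not_le.mp hz)

theorem stmt_6_general (ν : Measure E) {p : ℝ} (hp : 0 ≤ p)
    (hνp : ∫⁻ z, ENNReal.ofReal (min 1 (‖z‖ ^ p)) ∂ν < ∞) {x : E} (hx : 0 < ‖x‖) :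
    (ν ⊓ ν.map (fun z => z + x)) Set.univ ≤ 2 * ν {z | ‖x‖ / 2 ≤ ‖z‖} ∧
    ν {z | ‖x‖ / 2 ≤ ‖z‖} < ∞ :=
  ⟨measure_inf_map_add_right_univ_le ν x,
    measure_ge_lt_top_of_lintegral_min_one_rpow_lt_top (by fun_prop) hp hνp (half_pos hx)⟩

end SeminormedAddGroup

/-- For a Lévy measure `ν` and `x ≠ 0`, the measure `μ_x = ν ⊓ (δ_x * ν)` is finite:
`μ_x(ℝ^d) ≤ 2·ν({|z| ≥ |x|/2}) < ∞`. -/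
theorem stmt_6 {d : ℕ} (hd : 1 ≤ d) (ν : Measure (EuclideanSpace ℝ (Fin d)))
    [SigmaFinite ν] (hν0 : ν {0} = 0)
    (hν2 : ∫⁻ z, ENNReal.ofReal (min 1 (‖z‖ ^ 2)) ∂ν < ∞)
    (x : EuclideanSpace ℝ (Fin d)) (hx : x ≠ 0) :
    (ν ⊓ ν.map (fun z => z + x)) Set.univ ≤ 2 * ν {z | ‖x‖ / 2 ≤ ‖z‖} ∧
    ν {z | ‖x‖ / 2 ≤ ‖z‖} < ∞ := by
  exact stmt_6_general ν zero_le_two (by simpa only [Real.rpow_two] using hν2)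
    (norm_pos_iff.mpr hx)
end
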